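/- arXiv:math/0301175 — 5 statements merged into one kernel-verified Lean document; each statement's English description precedes it below -/
import Mathlib

section
/- Second cone identity for the streaming operator: let v ∈ ℝ³ with |v| < 1 and i ∈ {1,2,3}. Then for every φ ∈ C_c^∞(ℝ⁴), ⟨Y, t (x·v − t) ∂_{x_i} φ⟩ = ⟨Y, x_i φ + t x_i (∂_t + v·∇_x) φ⟩; that is, t (x·v − t) ∂_{x_i} Y = t x_i T Y in the sense of distributions on ℝ⁴, where T = ∂_t + v·∇_x. -/
open MeasureTheory Real Set Filter Metric RealInnerProductSpace
open scoped ENNReal NNReal Topology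

noncomputable section

/-- Physical space `ℝ³` with its Euclidean structure. -/
abbrev E3 : Type := EuclideanSpace ℝ (Fin 3)

/-- The `i`-th standard basis vector of `ℝ³`. -/
def e3 (i : Fin 3) : E3 := EuclideanSpace.single i 1

/-- The rotation invariant surface measure on the unit sphere `S² ⊂ ℝ³`
(with total mass `4π`). -/
def sphMeasure : Measure (Metric.sphere (0 : E3) 1) := (volume : Measure E3).toSphere

/-- The forward fundamental solution `Y` of the d'Alembertian in `1+3` dimensions, as a
measure on `ℝ⁴ = ℝₜ × ℝ³ₓ`: it acts on a function `φ` by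
`⟨Y,φ⟩ = ∫₀^∞ (1/(4πt)) ∫_{|x|=t} φ(t,x) dσ_t(x) dt
       = ∫₀^∞ (t/(4π)) ∫_{S²} φ(t,tω) dσ(ω) dt`. -/
def Ymeas : Measure (ℝ × E3) :=
  Measure.map (fun q : ℝ × Metric.sphere (0 : E3) 1 => (q.1, q.1 • (q.2 : E3)))
    ((((volume : Measure ℝ).restrict (Set.Ioi 0)).withDensity
        fun t => ENNReal.ofReal (t / (4 * Real.pi))).prod sphMeasure)

/-- Time derivative `∂ₜ` of a function on `ℝ⁴ = ℝₜ × ℝ³ₓ`. -/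
def dt4 (g : ℝ × E3 → ℝ) (p : ℝ × E3) : ℝ := fderiv ℝ g p ((1 : ℝ), (0 : E3))

/-- Spatial partial derivative `∂_{x_i}` of a function on `ℝ⁴ = ℝₜ × ℝ³ₓ`. -/
def dx4 (i : Fin 3) (g : ℝ × E3 → ℝ) (p : ℝ × E3) : ℝ := fderiv ℝ g p ((0 : ℝ), e3 i)

/-- The streaming operator `T = ∂ₜ + v·∇ₓ`, i.e. the directional derivative
along `(1,v)`. -/
def Tstr (v : E3) (g : ℝ × E3 → ℝ) (p : ℝ × E3) : ℝ := fderiv ℝ g p ((1 : ℝ), v)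


lemma vol_lint (g : E3 → ℝ≥0∞) (hg : Measurable g) :
    ∫⁻ x, g x = ∫⁻ r in Ioi (0:ℝ), ∫⁻ ω, ENNReal.ofReal (r ^ 2) * g (r • (ω : E3)) ∂sphMeasure := by
  have h1 : ∫⁻ x, g x = ∫⁻ x : ({(0 : E3)}ᶜ : Set E3), g x ∂((volume : Measure E3).comap (↑)) := by
    rw [lintegral_subtype_comap (measurableSet_singleton _).compl, restrict_compl_singleton]
  have h2 := (volume : Measure E3).measurePreserving_homeomorphUnitSphereProd.lintegral_comp_emb
    (Homeomorph.measurableEmbedding _) (fun q => g ((q.2 : ℝ) • (q.1 : E3)))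
  have h3 : ∀ x : ({(0 : E3)}ᶜ : Set E3),
      ((homeomorphUnitSphereProd E3 x).2 : ℝ) • ((homeomorphUnitSphereProd E3 x).1 : E3) = x := by
    intro x
    have hx : ‖(x : E3)‖ ≠ 0 := norm_ne_zero_iff.mpr x.2
    simp [smul_smul, hx]
  simp only [h3] at h2
  have hm : Measurable fun q : ℝ × sphere (0 : E3) 1 => g (q.1 • (q.2 : E3)) :=
    hg.comp (by fun_prop)
  have hm2 : Measurable fun q : sphere (0 : E3) 1 × Ioi (0:ℝ) => g ((q.2 : ℝ) • (q.1 : E3)) :=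
    hg.comp (by fun_prop)
  have hd : Module.finrank ℝ E3 - 1 = 2 := by simp
  rw [h1, h2, hd, lintegral_prod_symm' _ hm2, Measure.volumeIoiPow,
    lintegral_withDensity_eq_lintegral_mul _ (by fun_prop) hm2.lintegral_prod_left']
  simp only [Pi.mul_apply]
  have h4 := lintegral_subtype_comap (μ := (volume : Measure ℝ)) (measurableSet_Ioi (a := (0:ℝ)))
    (fun r : ℝ => ENNReal.ofReal (r ^ 2) * ∫⁻ ω, g (r • (ω : E3)) ∂sphMeasure)
  refine (Eq.trans h4 ?_)
  refine lintegral_congr fun r => ?_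
  rw [lintegral_const_mul]
  exact hm.comp measurable_prodMk_left

lemma Y_eq : Ymeas = Measure.map (fun x : E3 => (‖x‖, x))
    (volume.withDensity fun x => ENNReal.ofReal ((4 * π * ‖x‖)⁻¹)) := by
  refine Measure.ext_of_lintegral _ fun f hf => ?_
  have hm0 : Measurable fun q : ℝ × sphere (0 : E3) 1 => (q.1, q.1 • (q.2 : E3)) := by fun_prop
  have hc : Measurable fun x : E3 => (‖x‖, x) := by fun_prop
  have : SFinite sphMeasure := by unfold sphMeasure; infer_instance
  have hfm := hf.comp hm0
  have hfc := hf.comp hc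
  simp only [Function.comp_def] at hfm hfc
  rw [Ymeas, lintegral_map hf hm0, lintegral_map hf hc, lintegral_prod _ hfm.aemeasurable,
    lintegral_withDensity_eq_lintegral_mul _ (by fun_prop) hfm.lintegral_prod_right',
    lintegral_withDensity_eq_lintegral_mul _ (by fun_prop) hfc, vol_lint]
  · refine setLIntegral_congr_fun measurableSet_Ioi fun r hr => ?_
    have hr : 0 < r := hr
    simp only [Pi.mul_apply, Function.comp_apply]
    rw [← lintegral_const_mul]
    · refine lintegral_congr fun ω => ?_
      have hn : ‖r • (ω : E3)‖ = r := by
        rw [norm_smul, norm_eq_of_mem_sphere, mul_one, Real.norm_of_nonneg hr.le]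
      rw [hn, ← mul_assoc, ← ENNReal.ofReal_mul (by positivity)]
      congr 2
      field_simp
    · exact hf.comp (hm0.comp measurable_prodMk_left)
  · exact Measurable.mul (by fun_prop) (hf.comp hc)

lemma Y_int (f : ℝ × E3 → ℝ) (hf : Continuous f) :
    ∫ p, f p ∂Ymeas = ∫ x : E3, (4 * π * ‖x‖)⁻¹ * f (‖x‖, x) := by
  rw [Y_eq, integral_map (by fun_prop) hf.aestronglyMeasurable,
    integral_withDensity_eq_integral_toReal_smul (by fun_prop)
      (ae_of_all _ fun _ => ENNReal.ofReal_lt_top)]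
  refine integral_congr_ae (ae_of_all _ fun x => ?_)
  simp only [smul_eq_mul]
  rw [ENNReal.toReal_ofReal (by positivity)]

/-- Facts on restrictions of test functions to the cone. -/
lemma cone_int (h : ℝ × E3 → ℝ) (hh : ContDiff ℝ (⊤ : ℕ∞) h) (hc : HasCompactSupport h) (w : E3) :
    Integrable (fun x : E3 => ⟪x, w⟫ / ‖x‖ * dt4 h (‖x‖, x) + fderiv ℝ h (‖x‖, x) (0, w)) ∧
    ∫ x : E3, (⟪x, w⟫ / ‖x‖ * dt4 h (‖x‖, x) + fderiv ℝ h (‖x‖, x) (0, w)) = 0 := by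
  set G : E3 → ℝ := fun x => h (‖x‖, x) with hG
  obtain ⟨C, hC⟩ := hh.lipschitzWith_of_hasCompactSupport hc (by simp)
  have hGL : LipschitzWith (C * max 1 1) G := hC.comp (lipschitzWith_one_norm.prodMk LipschitzWith.id)
  have hGc : HasCompactSupport G := by
    refine HasCompactSupport.intro (hc.image continuous_snd) fun x hx => ?_
    by_contra hne
    exact hx ⟨(‖x‖, x), subset_tsupport _ hne, rfl⟩
  have hae : (fun x : E3 => ⟪x, w⟫ / ‖x‖ * dt4 h (‖x‖, x) + fderiv ℝ h (‖x‖, x) (0, w))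
      =ᵐ[volume] fun x => lineDeriv ℝ G x w := by
    have : ∀ᵐ x : E3, x ≠ 0 := by simp [ae_iff]
    filter_upwards [this] with x hx
    symm
    apply HasLineDerivAt.lineDeriv
    have hn : HasDerivAt (fun s : ℝ => ‖x + s • w‖) (⟪x, w⟫ / ‖x‖) 0 := by
      have h1 : HasDerivAt (fun s : ℝ => x + s • w) w 0 := by
        simpa using ((hasDerivAt_id (0:ℝ)).smul_const w).const_add x
      have h2 := h1.norm_sq.sqrt (by simpa using hx)
      simp only [Real.sqrt_sq (norm_nonneg _)] at h2
      convert h2 using 1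
      simp
      field_simp
    have h1 : HasDerivAt (fun s : ℝ => x + s • w) w 0 := by
      simpa using ((hasDerivAt_id (0:ℝ)).smul_const w).const_add x
    have hd : HasFDerivAt h (fderiv ℝ h (‖x‖, x)) (‖x + (0:ℝ) • w‖, x + (0:ℝ) • w) := by
      simpa using (hh.differentiable (by simp) (‖x‖, x)).hasFDerivAt
    have h3 := HasFDerivAt.comp_hasDerivAt (0:ℝ) hd (hn.prodMk h1)
    unfold HasLineDerivAt
    refine HasDerivAt.congr_deriv h3 ?_
    have : ((⟪x, w⟫ / ‖x‖, w) : ℝ × E3) = (⟪x, w⟫ / ‖x‖) • ((1:ℝ), (0:E3)) + (0, w) := by simp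
    rw [this, map_add, map_smul, dt4, smul_eq_mul]
  have hl : ∀ x u : E3, lineDeriv ℝ (fun _ : E3 => (1:ℝ)) x u = 0 := fun x u => by simp [lineDeriv]
  have hz : ∫ x, lineDeriv ℝ G x w = 0 := by
    have := (LipschitzWith.const (1:ℝ)).integral_lineDeriv_mul_eq (μ := (volume : Measure E3)) hGL hGc (-w)
    simpa [hl] using this.symm
  have hi : Integrable fun x => lineDeriv ℝ G x w := by
    rw [← integrableOn_iff_integrable_of_support_subset (s := tsupport G)]
    · exact (hGL.locallyIntegrable_lineDeriv w).integrableOn_isCompact hGc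
    · intro x hx
      by_contra hxn
      apply hx
      have h0 : G =ᶠ[𝓝 x] fun _ => 0 := notMem_tsupport_iff_eventuallyEq.mp hxn
      show lineDeriv ℝ G x w = 0
      rw [h0.lineDeriv_eq]
      simp [lineDeriv]
  exact ⟨hi.congr hae.symm, (integral_congr_ae hae).trans hz⟩

theorem second_cone_identity (v : E3) (hv : ‖v‖ < 1) (i : Fin 3) (φ : ℝ × E3 → ℝ)
    (hφ : ContDiff ℝ (⊤ : ℕ∞) φ) (hφc : HasCompactSupport φ) :
    ∫ p : ℝ × E3, p.1 * (⟪p.2, v⟫ - p.1) * dx4 i φ p ∂Ymeas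
      = ∫ p : ℝ × E3, (p.2 i * φ p + p.1 * p.2 i * Tstr v φ p) ∂Ymeas := by
  have hfd : Continuous (fderiv ℝ φ) := hφ.continuous_fderiv (by simp)
  have hφ' := hφ.continuous
  have hcoord : ContDiff ℝ (⊤ : ℕ∞) fun p : ℝ × E3 => p.2 i := by fun_prop
  have hcc := hcoord.continuous
  rw [Y_int _ (by unfold dx4; fun_prop), Y_int _ (by unfold Tstr; fun_prop)]
  have ha : ContDiff ℝ (⊤ : ℕ∞) fun p : ℝ × E3 => ⟪p.2, v⟫ - p.1 :=
    (contDiff_snd.inner ℝ contDiff_const).sub contDiff_fst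
  obtain ⟨i1, e1⟩ := cone_int (fun p => (⟪p.2, v⟫ - p.1) * φ p) (ha.mul hφ) hφc.mul_left (e3 i)
  obtain ⟨i2, e2⟩ := cone_int (fun p => p.2 i * φ p) (hcoord.mul hφ) hφc.mul_left v
  have f1 : ∀ p w, fderiv ℝ (fun p : ℝ × E3 => (⟪p.2, v⟫ - p.1) * φ p) p w
      = (⟪p.2, v⟫ - p.1) * fderiv ℝ φ p w + φ p * (⟪w.2, v⟫ - w.1) := by
    intro p w
    have hs : HasFDerivAt (fun p : ℝ × E3 => ⟪p.2, v⟫ - p.1)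
        (((innerSL ℝ v).comp (ContinuousLinearMap.snd ℝ ℝ E3)) - ContinuousLinearMap.fst ℝ ℝ E3) p := by
      refine (HasFDerivAt.congr_of_eventuallyEq (ContinuousLinearMap.hasFDerivAt _)
        (Eventually.of_forall fun q => ?_))
      simp [real_inner_comm]
    have hm := (hs.mul (hφ.differentiable (by simp) p).hasFDerivAt).fderiv
    simp only [Pi.mul_def] at hm
    rw [hm]
    simp [real_inner_comm]
  have f2 : ∀ p w, fderiv ℝ (fun p : ℝ × E3 => p.2 i * φ p) p w
      = p.2 i * fderiv ℝ φ p w + φ p * w.2 i := by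
    intro p w
    have hs : HasFDerivAt (fun p : ℝ × E3 => p.2 i)
        ((EuclideanSpace.proj i : E3 →L[ℝ] ℝ).comp (ContinuousLinearMap.snd ℝ ℝ E3)) p :=
      ((EuclideanSpace.proj i : E3 →L[ℝ] ℝ).comp (ContinuousLinearMap.snd ℝ ℝ E3)).hasFDerivAt
    have hm := (hs.mul (hφ.differentiable (by simp) p).hasFDerivAt).fderiv
    simp only [Pi.mul_def] at hm
    rw [hm]
    simp
  set A := fun x : E3 => (4 * π * ‖x‖)⁻¹ * (‖x‖ * (⟪x, v⟫ - ‖x‖) * dx4 i φ (‖x‖, x)) with hA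
  have hAe : A =ᵐ[volume] fun x => (4 * π)⁻¹ * ((⟪x, v⟫ - ‖x‖) * dx4 i φ (‖x‖, x)) := by
    have : ∀ᵐ x : E3, x ≠ 0 := by simp [ae_iff]
    filter_upwards [this] with x hx
    have : ‖x‖ ≠ 0 := by simpa using hx
    simp only [hA]
    field_simp
  have hAi : Integrable A := by
    refine Integrable.congr ?_ hAe.symm
    apply Continuous.integrable_of_hasCompactSupport
    · unfold dx4; fun_prop
    · refine HasCompactSupport.intro (hφc.image continuous_snd) fun x hx => ?_
      have : fderiv ℝ φ (‖x‖, x) = 0 := by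
        by_contra hne
        exact hx ⟨(‖x‖, x), support_fderiv_subset ℝ hne, rfl⟩
      simp [dx4, this]
  have key := integral_sub hAi ((i1.sub i2).const_mul (4 * π)⁻¹)
  simp only [Pi.sub_apply] at key
  rw [integral_const_mul, integral_sub i1 i2, e1, e2] at key
  simp only [sub_zero, mul_zero] at key
  rw [← key]
  refine integral_congr_ae ?_
  have : ∀ᵐ x : E3, x ≠ 0 := by simp [ae_iff]
  filter_upwards [this] with x hx
  have hx : ‖x‖ ≠ 0 := by simpa using hx
  have hT : fderiv ℝ φ (‖x‖, x) (1, v) = fderiv ℝ φ (‖x‖, x) (1, 0) + fderiv ℝ φ (‖x‖, x) (0, v) := by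
    rw [← map_add]; simp
  have he : ⟪x, e3 i⟫ = x i := by simp [e3, EuclideanSpace.inner_single_right]
  have he' : ⟪e3 i, v⟫ = v i := by simp [e3, EuclideanSpace.inner_single_left]
  simp only [hA, dt4, f1, f2, dx4, Tstr, hT, he, he']
  simp
  field_simp
  ring
end
end

section
/- Division lemma, first order: let v ∈ ℝ³ with |v| < 1 and i ∈ {0,1,2,3}. Then for every φ ∈ C_c^∞(ℝ⁴), ⟨Y, ∂_i φ⟩ = ⟨Y, α_i (∂_t + v·∇_x)φ + ((∂_t + v·∇_x)α_i) φ⟩, where all integrands are integrable against the cone measure Y; that is, ∂_i Y = T(α_i Y) + (−Tα_i) Y = α_i T Y in the sense of distributions on ℝ⁴. -/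
open MeasureTheory Real Set Filter Metric RealInnerProductSpace
open scoped ENNReal NNReal Topology

noncomputable section

/-- The four coordinate directions of `ℝ⁴ = ℝₜ × ℝ³ₓ` (with `x₀ = t`). -/
def dir4 : Fin 4 → ℝ × E3 :=
  Fin.cons ((1 : ℝ), (0 : E3)) fun j : Fin 3 => ((0 : ℝ), e3 j)

/-- The functions `α₀(t,x) = t/(t - x·v)` and `α_i(t,x) = x_i/(x·v - t)`, `i = 1,2,3`. -/
def alphaF (v : E3) : Fin 4 → ℝ × E3 → ℝ :=
  Fin.cons (fun p => p.1 / (p.1 - ⟪p.2, v⟫)) fun (j : Fin 3) p => p.2 j / (⟪p.2, v⟫ - p.1)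

/-- `Tα_i`, the streaming derivative of `α_i`. -/
def TalphaF (v : E3) (i : Fin 4) (p : ℝ × E3) : ℝ := fderiv ℝ (alphaF v i) p ((1 : ℝ), v)


lemma measurable_coneMap : Measurable (fun x : E3 => ((‖x‖, x) : ℝ × E3)) :=
  measurable_norm.prodMk measurable_id

lemma Ymeas_eq : Ymeas = Measure.map (fun x : E3 => ((‖x‖, x) : ℝ × E3))
    ((volume : Measure E3).withDensity fun x => ENNReal.ofReal (1 / (4 * Real.pi * ‖x‖))) := by
  have hm1 : Measurable (fun q : ℝ × Metric.sphere (0 : E3) 1 => ((q.1, q.1 • (q.2 : E3)) : ℝ × E3)) := by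
    fun_prop
  have : IsFiniteMeasure sphMeasure := by unfold sphMeasure; infer_instance
  refine Measure.ext_of_lintegral _ fun F hF => ?_
  have hdens : Measurable (fun x : E3 => ENNReal.ofReal (1 / (4 * Real.pi * ‖x‖))) := by fun_prop
  have hFc : Measurable (fun x : E3 => F (‖x‖, x)) := hF.comp measurable_coneMap
  rw [Ymeas, lintegral_map hF hm1, lintegral_map hF measurable_coneMap,
    lintegral_withDensity_eq_lintegral_mul _ hdens hFc,
    lintegral_prod_symm _ (by exact (hF.comp hm1).aemeasurable)]
  have h1 : ∀ w : Metric.sphere (0 : E3) 1,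
      ∫⁻ t, F (t, t • (w : E3)) ∂(((volume : Measure ℝ).restrict (Set.Ioi 0)).withDensity
        fun t => ENNReal.ofReal (t / (4 * Real.pi))) =
      ∫⁻ t in Set.Ioi (0:ℝ), ENNReal.ofReal (t / (4 * Real.pi)) * F (t, t • (w : E3)) := by
    intro w
    have hFw : Measurable (fun t : ℝ => F (t, t • (w : E3))) := hF.comp (by fun_prop)
    exact lintegral_withDensity_eq_lintegral_mul _ (by fun_prop) hFw
  simp only [h1]
  set H : E3 → ℝ≥0∞ := fun x => ENNReal.ofReal (1 / (4 * Real.pi * ‖x‖)) * F (‖x‖, x) with hH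
  have hHm : Measurable H := hdens.mul hFc
  change _ = ∫⁻ x, H x
  have e1 : ∫⁻ x, H x = ∫⁻ x : ({(0:E3)}ᶜ : Set E3), H x ∂((volume : Measure E3).comap (↑)) := by
    rw [lintegral_subtype_comap (measurableSet_singleton _).compl H,
        restrict_compl_singleton]
  have e2 := (volume : Measure E3).measurePreserving_homeomorphUnitSphereProd.symm
    (homeomorphUnitSphereProd E3).toMeasurableEquiv |>.lintegral_comp (f := fun x : ({(0:E3)}ᶜ : Set E3) => H x)
      (hHm.comp measurable_subtype_coe)
  rw [e1, ← e2, lintegral_prod _ (by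
    exact (hHm.comp measurable_subtype_coe |>.comp (MeasurableEquiv.measurable _)).aemeasurable)]
  refine lintegral_congr fun w => ?_
  have hf3 : Module.finrank ℝ E3 - 1 = 2 := by simp
  rw [hf3, Measure.volumeIoiPow, lintegral_withDensity_eq_lintegral_mul _ (by fun_prop) (by
    exact (hHm.comp measurable_subtype_coe |>.comp (MeasurableEquiv.measurable _)).comp (by fun_prop))]
  rw [← lintegral_subtype_comap measurableSet_Ioi]
  refine lintegral_congr fun t => ?_
  obtain ⟨t, ht⟩ := t
  have ht' : (0:ℝ) < t := ht
  have hsym : (((homeomorphUnitSphereProd E3).toMeasurableEquiv.symm (w, ⟨t, ht⟩) : ({(0:E3)}ᶜ : Set E3)) : E3)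
      = t • (w : E3) := rfl
  have hn : ‖t • (w : E3)‖ = t := by
    rw [norm_smul, Real.norm_of_nonneg ht'.le]; simp
  simp only [Pi.mul_apply, hsym, hH, hn]
  rw [← mul_assoc, ← ENNReal.ofReal_mul (by positivity)]
  congr 2
  field_simp

lemma Y_integrable_iff (F : ℝ × E3 → ℝ) (hF : Measurable F) :
    Integrable F Ymeas ↔ Integrable (fun x : E3 => F (‖x‖, x) / ‖x‖) := by
  have hdens : Measurable (fun x : E3 => ENNReal.ofReal (1 / (4 * Real.pi * ‖x‖))) := by fun_prop
  rw [Ymeas_eq, integrable_map_measure hF.aestronglyMeasurable measurable_coneMap.aemeasurable,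
    integrable_withDensity_iff hdens (Eventually.of_forall fun _ => ENNReal.ofReal_lt_top)]
  have : (fun x : E3 => ((F ∘ fun x : E3 => ((‖x‖, x) : ℝ × E3)) x) *
      (ENNReal.ofReal (1 / (4 * Real.pi * ‖x‖))).toReal) =
      fun x => (1 / (4 * Real.pi)) * (F (‖x‖, x) / ‖x‖) := by
    ext x
    rw [ENNReal.toReal_ofReal (by positivity)]
    simp only [Function.comp, div_eq_mul_inv, mul_inv]
    ring
  rw [this, integrable_const_mul_iff]
  exact isUnit_iff_ne_zero.2 (by positivity)

lemma Y_integral (F : ℝ × E3 → ℝ) (hF : Measurable F) :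
    ∫ p, F p ∂Ymeas = (1 / (4 * Real.pi)) * ∫ x : E3, F (‖x‖, x) / ‖x‖ := by
  have hdens : Measurable (fun x : E3 => ENNReal.ofReal (1 / (4 * Real.pi * ‖x‖))) := by fun_prop
  rw [Ymeas_eq, integral_map measurable_coneMap.aemeasurable hF.aestronglyMeasurable,
    integral_withDensity_eq_integral_toReal_smul hdens (Eventually.of_forall fun _ => ENNReal.ofReal_lt_top), ← integral_const_mul]
  congr 1
  ext x
  rw [ENNReal.toReal_ofReal (by positivity)]
  simp only [div_eq_mul_inv, mul_inv, smul_eq_mul]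
  ring

/-- the singular dominating function is integrable -/
lemma dom_integrable (C R : ℝ) :
    Integrable ((ball (0:E3) R).indicator fun x : E3 => C * (1 / ‖x‖ + 1 / ‖x‖ ^ 2)) := by
  rw [integrable_indicator_iff measurableSet_ball]
  refine Integrable.const_mul ?_ C
  have := (integrableOn_fun_norm_addHaar (volume : Measure E3)
    (f := fun r : ℝ => 1 / r + 1 / r ^ 2) (r := R)).2 ?_
  · exact this
  have h : IntegrableOn (fun y : ℝ => y + 1) (Ioo 0 R) :=
    ((by fun_prop : Continuous fun y : ℝ => y + 1).integrableOn_Icc (a := 0) (b := R)).mono_set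
      Ioo_subset_Icc_self
  refine h.congr_fun (fun y hy => ?_) measurableSet_Ioo
  have : y ≠ 0 := hy.1.ne'
  simp
  field_simp

lemma integral_fderiv_zero (f : E3 → ℝ) (hf : ContDiff ℝ 1 f) (hc : HasCompactSupport f) (w : E3) :
    Integrable (fun x => fderiv ℝ f x w) ∧ ∫ x, fderiv ℝ f x w = 0 := by
  have hI : Integrable (fun x => fderiv ℝ f x w) :=
    ((hf.continuous_fderiv one_ne_zero).clm_apply continuous_const).integrable_of_hasCompactSupport
      (hc.fderiv_apply (𝕜 := ℝ) w)
  refine ⟨hI, ?_⟩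
  have := integral_mul_fderiv_eq_neg_fderiv_mul_of_integrable (μ := (volume : Measure E3))
    (f := fun _ : E3 => (1:ℝ)) (g := f) (v := w) (by simp) (by simpa using hI)
    (by simpa using hf.continuous.integrable_of_hasCompactSupport hc) (by intros; fun_prop)
    (fun x _ => (hf.differentiable one_ne_zero).differentiableAt)
  simpa using this

/-- Minkowski form -/
def Qm (d p : ℝ × E3) : ℝ := p.1 * d.1 - ⟪p.2, d.2⟫

/-- explicit form of the right-hand integrand -/
def Gx (v : E3) (φ : ℝ × E3 → ℝ) (d p : ℝ × E3) : ℝ :=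
  Qm d p / Qm (1, v) p * fderiv ℝ φ p ((1:ℝ), v) +
    (Qm d (1, v) / Qm (1, v) p - Qm d p * Qm (1, v) (1, v) / Qm (1, v) p ^ 2) * φ p

lemma Qm_contDiff (d : ℝ × E3) : ContDiff ℝ 1 (Qm d) := by
  unfold Qm
  exact (contDiff_fst.mul contDiff_const).sub (contDiff_snd.inner ℝ contDiff_const)

lemma alphaF_eq (v : E3) (i : Fin 4) : alphaF v i = fun p => Qm (dir4 i) p / Qm (1, v) p := by
  ext p
  refine Fin.cases ?_ (fun j => ?_) i
  · simp [alphaF, dir4, Qm]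
  · simp only [alphaF, dir4, Qm, Fin.cons_succ, e3]
    rw [← neg_div_neg_eq]
    simp [EuclideanSpace.inner_single_right]

lemma Talpha_eq (v : E3) (i : Fin 4) (p : ℝ × E3) (hp : Qm (1, v) p ≠ 0) :
    TalphaF v i p = Qm (dir4 i) (1, v) / Qm (1, v) p
      - Qm (dir4 i) p * Qm (1, v) (1, v) / Qm (1, v) p ^ 2 := by
  have hQ : ∀ d : ℝ × E3, HasLineDerivAt ℝ (Qm d) (Qm d (1, v)) p (1, v) := by
    intro d
    have h : (fun t : ℝ => Qm d (p + t • ((1:ℝ), v))) = fun t => Qm d p + t * Qm d (1, v) := by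
      ext t
      simp [Qm, inner_add_left, inner_smul_left]
      ring
    unfold HasLineDerivAt
    rw [h]
    simpa using ((hasDerivAt_id (0:ℝ)).mul_const (Qm d (1, v))).const_add (Qm d p)
  have hd : DifferentiableAt ℝ (alphaF v i) p := by
    rw [alphaF_eq]
    exact ((Qm_contDiff _).contDiffAt.div (Qm_contDiff _).contDiffAt hp).differentiableAt one_ne_zero
  unfold TalphaF
  rw [← hd.lineDeriv_eq_fderiv]
  refine HasLineDerivAt.lineDeriv ?_
  rw [alphaF_eq]
  have h0 : Qm (1, v) (p + (0:ℝ) • ((1:ℝ), v)) ≠ 0 := by simpa using hp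
  have := HasDerivAt.div (hQ (dir4 i)) (hQ (1, v)) h0
  unfold HasLineDerivAt
  refine HasDerivAt.congr_deriv this ?_
  have hz : p + (0:ℝ) • ((1:ℝ), v) = p := by simp
  rw [hz]
  field_simp

lemma Qm_pos (v : E3) (t : ℝ) (x : E3) (hx : ‖x‖ ≤ t) :
    (1 - ‖v‖) * t ≤ Qm (1, v) (t, x) := by
  have h := real_inner_le_norm x v
  simp only [Qm]
  nlinarith [norm_nonneg x, norm_nonneg v]

lemma Qm_abs (d : ℝ × E3) (t : ℝ) (x : E3) (hx : ‖x‖ ≤ t) :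
    |Qm d (t, x)| ≤ (|d.1| + ‖d.2‖) * t := by
  have h := abs_real_inner_le_norm x d.2
  have ht : 0 ≤ t := (norm_nonneg x).trans hx
  simp only [Qm]
  calc |t * d.1 - ⟪x, d.2⟫| ≤ |t * d.1| + |⟪x, d.2⟫| := abs_sub _ _
    _ ≤ t * |d.1| + ‖x‖ * ‖d.2‖ := by rw [abs_mul, abs_of_nonneg ht]; gcongr
    _ ≤ t * |d.1| + t * ‖d.2‖ := by gcongr
    _ = _ := by ring

def tau (ε : ℝ) (x : E3) : ℝ := √(‖x‖ ^ 2 + ε ^ 2)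

lemma tau_pos {ε : ℝ} (hε : 0 < ε) (x : E3) : 0 < tau ε x := by unfold tau; positivity

lemma tau_ge (ε : ℝ) (x : E3) : ‖x‖ ≤ tau ε x := Real.le_sqrt_of_sq_le (by nlinarith [sq_nonneg ε])

lemma tau_zero (x : E3) : tau 0 x = ‖x‖ := by simp [tau]

lemma tau_contDiff {ε : ℝ} (hε : 0 < ε) : ContDiff ℝ 1 (tau ε) := by
  unfold tau
  exact ContDiff.sqrt ((contDiff_norm_sq ℝ).add contDiff_const) (fun x => by positivity)

lemma tau_line {ε : ℝ} (hε : 0 < ε) (x w : E3) :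
    HasDerivAt (fun s : ℝ => tau ε (x + s • w)) (⟪x, w⟫ / tau ε x) 0 := by
  have h1 : HasDerivAt (fun s : ℝ => ‖x + s • w‖ ^ 2 + ε ^ 2) (2 * ⟪x, w⟫) 0 := by
    have : (fun s : ℝ => ‖x + s • w‖ ^ 2 + ε ^ 2)
        = fun s => ‖x‖ ^ 2 + ε ^ 2 + (s * (2 * ⟪x, w⟫) + s ^ 2 * ‖w‖ ^ 2) := by
      ext s
      rw [norm_add_sq_real, inner_smul_right, norm_smul, mul_pow, Real.norm_eq_abs, sq_abs]
      ring
    rw [this]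
    have h := (((hasDerivAt_id (0:ℝ)).mul_const (2 * ⟪x, w⟫)).add
      (((hasDerivAt_id (0:ℝ)).pow 2).mul_const (‖w‖ ^ 2))).const_add (‖x‖ ^ 2 + ε ^ 2)
    simpa using h
  have h2 := h1.sqrt (by positivity)
  unfold tau
  convert h2 using 1
  simp only [zero_smul, add_zero]
  field_simp

lemma key_pointwise (v : E3) (hv : ‖v‖ < 1) (φ : ℝ × E3 → ℝ) (hφ : ContDiff ℝ 1 φ) (d : ℝ × E3)
    {ε : ℝ} (hε : 0 < ε) (x : E3) :
    fderiv ℝ (fun y => φ (tau ε y, y) / tau ε y) x d.2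
    - fderiv ℝ (fun y => Qm d (tau ε y, y) * φ (tau ε y, y)
        / (tau ε y * Qm (1, v) (tau ε y, y))) x v
    = (fderiv ℝ φ (tau ε x, x) d - Gx v φ d (tau ε x, x)) / tau ε x := by
  have hτ := tau_contDiff hε
  have hg : ContDiff ℝ 1 (fun y : E3 => ((tau ε y, y) : ℝ × E3)) := hτ.prodMk contDiff_id
  have hS : ∀ y, Qm (1, v) (tau ε y, y) ≠ 0 := fun y =>
    (lt_of_lt_of_le (mul_pos (by linarith) (tau_pos hε y)) (Qm_pos v _ y (tau_ge ε y))).ne'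
  have hT : ∀ y, tau ε y ≠ 0 := fun y => (tau_pos hε y).ne'
  have hd1 : ContDiff ℝ 1 (fun y => φ (tau ε y, y) / tau ε y) := (hφ.comp hg).div hτ hT
  have hd2 : ContDiff ℝ 1 (fun y => Qm d (tau ε y, y) * φ (tau ε y, y)
        / (tau ε y * Qm (1, v) (tau ε y, y))) :=
    (((Qm_contDiff d).comp hg).mul (hφ.comp hg)).div (hτ.mul ((Qm_contDiff (1,v)).comp hg))
      (fun y => mul_ne_zero (hT y) (hS y))
  have hline : ∀ w : E3, HasDerivAt (fun s : ℝ => ((tau ε (x + s • w), x + s • w) : ℝ × E3))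
      ((⟪x, w⟫ / tau ε x, w)) 0 := by
    intro w
    refine (tau_line hε x w).prodMk ?_
    simpa using ((hasDerivAt_id (0:ℝ)).smul_const w).const_add x
  have hφl : ∀ w : E3, HasDerivAt (fun s : ℝ => φ (tau ε (x + s • w), x + s • w))
      (fderiv ℝ φ (tau ε x, x) (⟪x, w⟫ / tau ε x, w)) 0 := by
    intro w
    have h0 : HasFDerivAt φ (fderiv ℝ φ (tau ε x, x)) (tau ε (x + (0:ℝ) • w), x + (0:ℝ) • w) := by
      simpa using ((hφ.differentiable one_ne_zero) (tau ε x, x)).hasFDerivAt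
    exact h0.comp_hasDerivAt (0:ℝ) (hline w)
  have hQl : ∀ c : ℝ × E3, HasDerivAt (fun s : ℝ => Qm c (tau ε (x + s • v), x + s • v))
      (⟪x, v⟫ / tau ε x * c.1 - ⟪v, c.2⟫) 0 := by
    intro c
    simp only [Qm, inner_add_left, inner_smul_left]
    refine ((tau_line hε x v).mul_const c.1).sub ?_
    simpa using ((hasDerivAt_id (0:ℝ)).mul_const ⟪v, c.2⟫).const_add ⟪x, c.2⟫
  have hx0 : ∀ w : E3, x + (0:ℝ) • w = x := by simp
  have key : ∀ (f : E3 → ℝ) (w : E3) (c : ℝ), ContDiff ℝ 1 f →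
      HasDerivAt (fun s : ℝ => f (x + s • w)) c 0 → fderiv ℝ f x w = c := by
    intro f w c hf h
    rw [← ((hf.differentiable one_ne_zero) x).lineDeriv_eq_fderiv]
    exact h.deriv
  have E1 := key _ d.2 _ hd1
    ((hφl d.2).div (tau_line hε x d.2) (by rw [hx0]; exact hT x))
  have E2 := key _ v _ hd2 (((hQl d).mul (hφl v)).div ((tau_line hε x v).mul (hQl (1, v)))
      (by simp only [hx0]; exact mul_ne_zero (hT x) (hS x)))
  rw [E1, E2]
  simp only [Pi.mul_apply, hx0]
  have hlin : ∀ (a : ℝ) (w : E3), fderiv ℝ φ (tau ε x, x) (a, w)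
      = a * fderiv ℝ φ (tau ε x, x) (1, 0) + fderiv ℝ φ (tau ε x, x) (0, w) := by
    intro a w
    rw [← smul_eq_mul, ← map_smul, ← map_add]
    simp
  obtain ⟨d0, e⟩ := d
  have hSx := hS x
  have hTx := hT x
  simp only [Gx]
  rw [hlin _ e, hlin _ v, hlin d0 e, hlin 1 v]
  generalize fderiv ℝ φ (tau ε x, x) (1, 0) = A
  generalize fderiv ℝ φ (tau ε x, x) (0, e) = B
  generalize fderiv ℝ φ (tau ε x, x) (0, v) = C
  generalize φ (tau ε x, x) = f
  simp only [Qm] at hSx ⊢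
  generalize tau ε x = t at *
  generalize ⟪x, v⟫ = b at *
  generalize ⟪x, e⟫ = a at *
  generalize ⟪v, e⟫ = c at *
  generalize ⟪v, v⟫ = q at *
  have hSx' : t - b ≠ 0 := by simpa using hSx
  simp only [mul_one]
  field_simp
  ring

lemma Gx_measurable (v : E3) (φ : ℝ × E3 → ℝ) (hφ : ContDiff ℝ 1 φ) (d : ℝ × E3) :
    Measurable (Gx v φ d) := by
  unfold Gx
  have h1 : ∀ c, Measurable (Qm c) := fun c => (Qm_contDiff c).continuous.measurable
  have h2 := measurable_fderiv_apply_const ℝ φ ((1:ℝ), v)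
  have h3 := hφ.continuous.measurable
  exact (((h1 d).div (h1 (1, v))).mul h2).add (((measurable_const.div (h1 (1, v))).sub
    (((h1 d).mul measurable_const).div ((h1 (1, v)).pow_const 2))).mul h3)

lemma Gx_continuousAt (v : E3) (φ : ℝ × E3 → ℝ) (hφ : ContDiff ℝ 1 φ) (d p : ℝ × E3)
    (hp : Qm (1, v) p ≠ 0) : ContinuousAt (Gx v φ d) p := by
  unfold Gx
  have h1 : ∀ c, ContinuousAt (Qm c) p := fun c => (Qm_contDiff c).continuous.continuousAt
  have h2 : ContinuousAt (fun p => fderiv ℝ φ p ((1:ℝ), v)) p :=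
    ((hφ.continuous_fderiv one_ne_zero).clm_apply continuous_const).continuousAt
  have h3 : ContinuousAt φ p := hφ.continuous.continuousAt
  exact (((h1 d).div (h1 (1, v)) hp).mul h2).add (((continuousAt_const.div (h1 (1, v)) hp).sub
    (((h1 d).mul continuousAt_const).div ((h1 (1, v)).pow 2) (pow_ne_zero 2 hp))).mul h3)

lemma bounds (v : E3) (hv : ‖v‖ < 1) (φ : ℝ × E3 → ℝ) (hφ : ContDiff ℝ 1 φ)
    (hφc : HasCompactSupport φ) (d : ℝ × E3) :
    ∃ C R : ℝ, 0 ≤ C ∧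
      (∀ (t : ℝ) (x : E3), ‖x‖ ≤ t → 0 < t → |fderiv ℝ φ (t, x) d| ≤ C * (1 + 1 / t)) ∧
      (∀ (t : ℝ) (x : E3), ‖x‖ ≤ t → 0 < t → |Gx v φ d (t, x)| ≤ C * (1 + 1 / t)) ∧
      (∀ (t : ℝ) (x : E3), R ≤ ‖x‖ →
        φ (t, x) = 0 ∧ fderiv ℝ φ (t, x) d = 0 ∧ Gx v φ d (t, x) = 0) := by
  obtain ⟨M, hM⟩ := (hφ.continuous_fderiv one_ne_zero).bounded_above_of_compact_support
    (hφc.fderiv (𝕜 := ℝ))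
  obtain ⟨N, hN⟩ := hφ.continuous.bounded_above_of_compact_support hφc
  have hM0 : 0 ≤ M := (norm_nonneg _).trans (hM 0)
  have hN0 : 0 ≤ N := (norm_nonneg _).trans (hN 0)
  obtain ⟨R, hR⟩ := (hφc.isCompact.isBounded).subset_ball (0 : ℝ × E3)
  have hk : 0 < 1 - ‖v‖ := by linarith
  set k := 1 - ‖v‖ with hkdef
  set D := |d.1| + ‖d.2‖ with hD
  have hD0 : 0 ≤ D := by positivity
  set a := |Qm d (1, v)|
  set b := |Qm (1, v) (1, v)|
  have ha : 0 ≤ a := abs_nonneg _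
  have hb : 0 ≤ b := abs_nonneg _
  set u : ℝ × E3 := (1, v) with hu
  refine ⟨M * ‖d‖ + D / k * (M * ‖u‖) + (a / k + D * b / k ^ 2) * N, R, by positivity, ?_, ?_, ?_⟩
  · intro t x _ ht
    have h1 : |fderiv ℝ φ (t, x) d| ≤ M * ‖d‖ :=
      (fderiv ℝ φ (t, x)).le_of_opNorm_le (hM _) d
    have h2 : M * ‖d‖ ≤ M * ‖d‖ + D / k * (M * ‖u‖) + (a / k + D * b / k ^ 2) * N := by
      have : 0 ≤ D / k * (M * ‖u‖) + (a / k + D * b / k ^ 2) * N := by positivity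
      linarith
    have h3 : 0 ≤ 1 / t := by positivity
    have h4 : 0 ≤ M * ‖d‖ := by positivity
    nlinarith
  · intro t x hx ht
    have hS := Qm_pos v t x hx
    have hS0 : 0 < Qm u (t, x) := lt_of_lt_of_le (by positivity) hS
    have hQ := Qm_abs d t x hx
    have e1 : |Qm d (t, x) / Qm u (t, x)| ≤ D / k := by
      rw [abs_div, abs_of_pos hS0]
      calc |Qm d (t, x)| / Qm u (t, x) ≤ (D * t) / (k * t) := by gcongr
        _ = D / k := by field_simp
    have e2 : |fderiv ℝ φ (t, x) u| ≤ M * ‖u‖ := (fderiv ℝ φ (t, x)).le_of_opNorm_le (hM _) u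
    have e3 : |Qm d u / Qm u (t, x)| ≤ a / k * (1 / t) := by
      rw [abs_div, abs_of_pos hS0]
      calc |Qm d u| / Qm u (t, x) ≤ a / (k * t) := by gcongr
        _ = a / k * (1 / t) := by field_simp
    have e4 : |Qm d (t, x) * Qm u u / Qm u (t, x) ^ 2| ≤ D * b / k ^ 2 * (1 / t) := by
      rw [abs_div, abs_mul, abs_of_pos (pow_pos hS0 2)]
      calc |Qm d (t, x)| * |Qm u u| / Qm u (t, x) ^ 2 ≤ (D * t) * b / (k * t) ^ 2 := by gcongr
        _ = _ := by field_simp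
    have e5 : |φ (t, x)| ≤ N := hN _
    have h3 : 0 ≤ 1 / t := by positivity
    have : |Gx v φ d (t, x)| ≤ D / k * (M * ‖u‖) + (a / k * (1 / t) + D * b / k ^ 2 * (1 / t)) * N := by
      unfold Gx
      refine (abs_add_le _ _).trans ?_
      rw [abs_mul, abs_mul]
      gcongr
      exact (abs_sub _ _).trans (add_le_add e3 e4)
    refine this.trans ?_
    have p1 : 0 ≤ D / k * (M * ‖u‖) := by positivity
    have p2 : 0 ≤ (a / k + D * b / k ^ 2) * N := by positivity
    have p3 : 0 ≤ M * ‖d‖ := by positivity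
    have p4 := mul_nonneg (add_nonneg p1 p3) h3
    nlinarith
  · intro t x hx
    have hnot : (t, x) ∉ tsupport φ := by
      intro h
      have := hR h
      rw [mem_ball_zero_iff] at this
      have h2 : ‖x‖ ≤ ‖(t, x)‖ := norm_snd_le (t, x)
      linarith
    have h0 : φ (t, x) = 0 := image_eq_zero_of_notMem_tsupport hnot
    have h1 : fderiv ℝ φ (t, x) = 0 := fderiv_of_notMem_tsupport ℝ hnot
    simp [Gx, h0, h1]

lemma measurable_dx (φ : ℝ × E3 → ℝ) (d : ℝ × E3) : Measurable fun p => fderiv ℝ φ p d :=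
  measurable_fderiv_apply_const ℝ φ d

lemma dom_le {C t r : ℝ} (hC : 0 ≤ C) (hr : 0 < r) (hrt : r ≤ t) :
    C * (1 + 1 / t) / t ≤ C * (1 / r + 1 / r ^ 2) := by
  have ht : 0 < t := hr.trans_le hrt
  have : C * (1 + 1 / t) / t = C * (1 / t + 1 / t ^ 2) := by field_simp
  rw [this]
  gcongr

lemma ae_ne_zero : ∀ᵐ x : E3, x ≠ 0 := by
  rw [ae_iff]; simp

lemma dominated {F : ℝ × E3 → ℝ} {C R : ℝ} (hC : 0 ≤ C)
    (h1 : ∀ (t : ℝ) (x : E3), ‖x‖ ≤ t → 0 < t → |F (t, x)| ≤ C * (1 + 1 / t))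
    (h2 : ∀ (t : ℝ) (x : E3), R ≤ ‖x‖ → F (t, x) = 0) (t : ℝ) (x : E3) (hx : x ≠ 0)
    (ht : ‖x‖ ≤ t) :
    ‖F (t, x) / t‖ ≤ (ball (0:E3) R).indicator (fun x : E3 => C * (1 / ‖x‖ + 1 / ‖x‖ ^ 2)) x := by
  have hx0 : 0 < ‖x‖ := norm_pos_iff.2 hx
  by_cases h : x ∈ ball (0:E3) R
  · rw [indicator_of_mem h, norm_div, Real.norm_eq_abs, Real.norm_of_nonneg (hx0.le.trans ht)]
    refine le_trans ?_ (dom_le hC hx0 ht)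
    gcongr
    · exact hx0.le.trans ht
    · exact h1 t x ht (hx0.trans_le ht)
  · rw [indicator_of_notMem h, h2 t x (by simpa using h)]
    simp

lemma cone_integrable {F : ℝ × E3 → ℝ} (hF : Measurable F) {C R : ℝ} (hC : 0 ≤ C)
    (h1 : ∀ (t : ℝ) (x : E3), ‖x‖ ≤ t → 0 < t → |F (t, x)| ≤ C * (1 + 1 / t))
    (h2 : ∀ (t : ℝ) (x : E3), R ≤ ‖x‖ → F (t, x) = 0) :
    Integrable (fun x : E3 => F (‖x‖, x) / ‖x‖) := by
  refine (dom_integrable C R).mono' ?_ ?_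
  · exact ((hF.comp measurable_coneMap).div measurable_norm).aestronglyMeasurable
  · filter_upwards [ae_ne_zero] with x hx
    exact dominated hC h1 h2 _ x hx le_rfl

lemma eps_zero (v : E3) (hv : ‖v‖ < 1) (φ : ℝ × E3 → ℝ) (hφ : ContDiff ℝ 1 φ)
    (hφc : HasCompactSupport φ) (d : ℝ × E3) {ε : ℝ} (hε : 0 < ε) :
    ∫ x, (fderiv ℝ φ (tau ε x, x) d - Gx v φ d (tau ε x, x)) / tau ε x = 0 := by
  obtain ⟨C, R, -, -, -, hR⟩ := bounds v hv φ hφ hφc d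
  have hτ := tau_contDiff hε
  have hg : ContDiff ℝ 1 (fun y : E3 => ((tau ε y, y) : ℝ × E3)) := hτ.prodMk contDiff_id
  have hS : ∀ y, Qm (1, v) (tau ε y, y) ≠ 0 := fun y =>
    (lt_of_lt_of_le (mul_pos (by linarith) (tau_pos hε y)) (Qm_pos v _ y (tau_ge ε y))).ne'
  have hT : ∀ y, tau ε y ≠ 0 := fun y => (tau_pos hε y).ne'
  have hd1 : ContDiff ℝ 1 (fun y => φ (tau ε y, y) / tau ε y) := (hφ.comp hg).div hτ hT
  have hd2 : ContDiff ℝ 1 (fun y => Qm d (tau ε y, y) * φ (tau ε y, y)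
        / (tau ε y * Qm (1, v) (tau ε y, y))) :=
    (((Qm_contDiff d).comp hg).mul (hφ.comp hg)).div (hτ.mul ((Qm_contDiff (1,v)).comp hg))
      (fun y => mul_ne_zero (hT y) (hS y))
  have hz : ∀ x, x ∉ closedBall (0:E3) R → φ (tau ε x, x) = 0 := by
    intro x hx
    refine (hR _ x ?_).1
    have : R < ‖x‖ := by simpa using hx
    exact this.le
  have hc1 : HasCompactSupport (fun y => φ (tau ε y, y) / tau ε y) :=
    HasCompactSupport.intro (isCompact_closedBall (0:E3) R) fun x hx => by rw [hz x hx]; simp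
  have hc2 : HasCompactSupport (fun y => Qm d (tau ε y, y) * φ (tau ε y, y)
        / (tau ε y * Qm (1, v) (tau ε y, y))) :=
    HasCompactSupport.intro (isCompact_closedBall (0:E3) R) fun x hx => by rw [hz x hx]; simp
  obtain ⟨i1, z1⟩ := integral_fderiv_zero _ hd1 hc1 d.2
  obtain ⟨i2, z2⟩ := integral_fderiv_zero _ hd2 hc2 v
  simp only [← key_pointwise v hv φ hφ d hε]
  rw [integral_sub i1 i2, z1, z2, sub_zero]

lemma cone_zero (v : E3) (hv : ‖v‖ < 1) (φ : ℝ × E3 → ℝ) (hφ : ContDiff ℝ 1 φ)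
    (hφc : HasCompactSupport φ) (d : ℝ × E3) :
    ∫ x : E3, (fderiv ℝ φ (‖x‖, x) d - Gx v φ d (‖x‖, x)) / ‖x‖ = 0 := by
  obtain ⟨C, R, hC, hA, hG, hR⟩ := bounds v hv φ hφ hφc d
  set F : ℝ × E3 → ℝ := fun p => fderiv ℝ φ p d - Gx v φ d p with hFdef
  have hFm : Measurable F := (measurable_dx φ d).sub (Gx_measurable v φ hφ d)
  have h1 : ∀ (t : ℝ) (x : E3), ‖x‖ ≤ t → 0 < t → |F (t, x)| ≤ (2 * C) * (1 + 1 / t) := by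
    intro t x hx ht
    have := (abs_sub (fderiv ℝ φ (t, x) d) (Gx v φ d (t, x))).trans
      (add_le_add (hA t x hx ht) (hG t x hx ht))
    simp only [hFdef]
    linarith
  have h2 : ∀ (t : ℝ) (x : E3), R ≤ ‖x‖ → F (t, x) = 0 := by
    intro t x hx
    simp [hFdef, (hR t x hx).2.1, (hR t x hx).2.2]
  have hlim : Tendsto (fun ε : ℝ => ∫ x : E3, F (tau ε x, x) / tau ε x) (𝓝[>] 0)
      (𝓝 (∫ x : E3, F (‖x‖, x) / ‖x‖)) := by
    refine tendsto_integral_filter_of_dominated_convergence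
      ((ball (0:E3) R).indicator fun x : E3 => (2 * C) * (1 / ‖x‖ + 1 / ‖x‖ ^ 2)) ?_ ?_
      (dom_integrable (2 * C) R) ?_
    · refine Eventually.of_forall fun ε => ?_
      have ht : Measurable (tau ε) := by unfold tau; fun_prop
      exact ((hFm.comp (ht.prodMk measurable_id)).div ht).aestronglyMeasurable
    · refine Eventually.of_forall fun ε => ?_
      filter_upwards [ae_ne_zero] with x hx
      exact dominated (by positivity) h1 h2 _ x hx (tau_ge ε x)
    · filter_upwards [ae_ne_zero] with x hx
      have hx0 : 0 < ‖x‖ := norm_pos_iff.2 hx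
      have hS : Qm (1, v) (‖x‖, x) ≠ 0 :=
        (lt_of_lt_of_le (mul_pos (by linarith) hx0) (Qm_pos v _ x le_rfl)).ne'
      have hFc : ContinuousAt F (‖x‖, x) := by
        refine ContinuousAt.sub ?_ (Gx_continuousAt v φ hφ d _ hS)
        exact ((hφ.continuous_fderiv one_ne_zero).clm_apply continuous_const).continuousAt
      have ht : Tendsto (fun ε => tau ε x) (𝓝[>] 0) (𝓝 ‖x‖) := by
        have hc : Continuous (fun ε => tau ε x) := by unfold tau; fun_prop
        have := hc.tendsto 0
        rw [tau_zero] at this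
        exact this.mono_left nhdsWithin_le_nhds
      have hp : Tendsto (fun ε => ((tau ε x, x) : ℝ × E3)) (𝓝[>] 0) (𝓝 (‖x‖, x)) :=
        ht.prodMk_nhds tendsto_const_nhds
      exact (hFc.tendsto.comp hp).div ht hx0.ne'
  have hlim0 : Tendsto (fun ε : ℝ => ∫ x : E3, F (tau ε x, x) / tau ε x) (𝓝[>] 0) (𝓝 0) := by
    refine tendsto_const_nhds.congr' ?_
    filter_upwards [self_mem_nhdsWithin] with ε hε
    exact (eps_zero v hv φ hφ hφc d hε).symm
  exact tendsto_nhds_unique hlim hlim0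

/-- **Division lemma, first order**: for `|v| < 1` and `i ∈ {0,1,2,3}`, for every
`φ ∈ C_c^∞(ℝ⁴)` one has `⟨Y, ∂_iφ⟩ = ⟨Y, α_i Tφ + (Tα_i) φ⟩`, all integrands being
integrable against the cone measure `Y`; i.e.
`∂_iY = T(α_iY) + (-Tα_i)Y = α_i T Y` in the sense of distributions on `ℝ⁴`. -/
theorem division_lemma_first_order (v : E3) (hv : ‖v‖ < 1) (i : Fin 4) (φ : ℝ × E3 → ℝ)
    (hφ : ContDiff ℝ (⊤ : ℕ∞) φ) (hφc : HasCompactSupport φ) :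
    Integrable (fun p : ℝ × E3 => fderiv ℝ φ p (dir4 i)) Ymeas ∧
    Integrable (fun p : ℝ × E3 => alphaF v i p * Tstr v φ p + TalphaF v i p * φ p) Ymeas ∧
    ∫ p : ℝ × E3, fderiv ℝ φ p (dir4 i) ∂Ymeas
      = ∫ p : ℝ × E3, (alphaF v i p * Tstr v φ p + TalphaF v i p * φ p) ∂Ymeas := by
  have hφ1 : ContDiff ℝ 1 φ := hφ.of_le (by exact_mod_cast le_top)
  obtain ⟨C, R, hC, hA, hG, hR⟩ := bounds v hv φ hφ1 hφc (dir4 i)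
  have mA := measurable_dx φ (dir4 i)
  have mG := Gx_measurable v φ hφ1 (dir4 i)
  have mB : Measurable (fun p : ℝ × E3 => alphaF v i p * Tstr v φ p + TalphaF v i p * φ p) := by
    have h1 : Measurable (alphaF v i) := by
      rw [alphaF_eq]
      exact (Qm_contDiff _).continuous.measurable.div (Qm_contDiff _).continuous.measurable
    have h2 : Measurable (Tstr v φ) := measurable_dx φ (1, v)
    have h3 : Measurable (TalphaF v i) := measurable_dx (alphaF v i) (1, v)
    exact (h1.mul h2).add (h3.mul hφ.continuous.measurable)
  have hBG : ∀ x : E3, (alphaF v i (‖x‖, x) * Tstr v φ (‖x‖, x)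
      + TalphaF v i (‖x‖, x) * φ (‖x‖, x)) / ‖x‖ = Gx v φ (dir4 i) (‖x‖, x) / ‖x‖ := by
    intro x
    by_cases hx : x = 0
    · simp [hx]
    have hx0 : 0 < ‖x‖ := norm_pos_iff.2 hx
    have hS : Qm (1, v) (‖x‖, x) ≠ 0 :=
      (lt_of_lt_of_le (mul_pos (by linarith) hx0) (Qm_pos v _ x le_rfl)).ne'
    rw [Talpha_eq v i _ hS, alphaF_eq]
    rfl
  have iA := cone_integrable mA hC hA (fun t x hx => (hR t x hx).2.1)
  have iG := cone_integrable mG hC hG (fun t x hx => (hR t x hx).2.2)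
  refine ⟨(Y_integrable_iff _ mA).2 iA, (Y_integrable_iff _ mB).2 ?_, ?_⟩
  · simp only [hBG]
    exact iG
  · rw [Y_integral _ mA, Y_integral _ mB]
    simp only [hBG]
    congr 1
    have := cone_zero v hv φ hφ1 hφc (dir4 i)
    simp only [sub_div] at this
    rw [integral_sub iA iG] at this
    linarith
end
end

section
/- Vanishing spherical mean of the degree −2 coefficients in the division lemma: let v ∈ ℝ³ with |v| < 1 and i,j ∈ {0,1,2,3}. With T = ∂_t + v·∇_x and b²_{ij} = −∂_i(Tα_j) + T(α_i Tα_j), one has ∫_{S²} b²_{ij}(1,ω) dσ(ω) = 0, where dσ is the rotation-invariant surface measure on the unit sphere S² ⊂ ℝ³ and b²_{ij}(1,ω) denotes the value of b²_{ij} at the point (t,x) = (1,ω). -/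
open MeasureTheory Real Set Filter Metric RealInnerProductSpace
open scoped ENNReal NNReal Topology

noncomputable section

/-- The coefficient `b²_{ij} = -∂_i(Tα_j) + T(α_i Tα_j)`. -/
def b2F (v : E3) (i j : Fin 4) (p : ℝ × E3) : ℝ :=
  -fderiv ℝ (TalphaF v j) p (dir4 i)
    + fderiv ℝ (fun q => alphaF v i q * TalphaF v j q) p ((1 : ℝ), v)

lemma hasFDerivAt_norm_E3 (x : E3) (hx : x ≠ 0) :
    HasFDerivAt (fun x : E3 => ‖x‖) (‖x‖⁻¹ • innerSL ℝ x) x := by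
  have hn : ‖x‖ ≠ 0 := norm_ne_zero_iff.2 hx
  have h := (hasStrictFDerivAt_norm_sq x).hasFDerivAt.sqrt (by positivity)
  simp only [Real.sqrt_sq (norm_nonneg _)] at h
  have e : ‖x‖⁻¹ • innerSL ℝ x = (1 / (2 * ‖x‖)) • 2 • innerSL ℝ x := by
    ext w
    simp only [smul_apply, innerSL_apply_apply, smul_eq_mul, nsmul_eq_mul]
    push_cast
    field_simp
  rw [e]; exact h

lemma integral_polar_sep (F : E3 → ℝ) (k : ℝ → ℝ) (g : Metric.sphere (0 : E3) 1 → ℝ)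
    (hF : ∀ (ω : Metric.sphere (0 : E3) 1) (r : ℝ), 0 < r → F (r • (ω : E3)) = k r * g ω) :
    ∫ x, F x = (∫ ω, g ω ∂sphMeasure) * ∫ r in Ioi (0 : ℝ), r ^ 2 * k r := by
  have hd : Module.finrank ℝ E3 - 1 = 2 := by simp
  calc
    ∫ x, F x = ∫ x : ({(0)}ᶜ : Set E3), F x.1 ∂((volume : Measure E3).comap (↑)) := by
      rw [integral_subtype_comap (measurableSet_singleton _).compl fun x ↦ F x,
        restrict_compl_singleton]
    _ = ∫ q, g q.1 * k q.2.1 ∂(volume : Measure E3).toSphere.prod (.volumeIoiPow (Module.finrank ℝ E3 - 1)) := by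
      rw [← (volume : Measure E3).measurePreserving_homeomorphUnitSphereProd.integral_comp
        (Homeomorph.measurableEmbedding _)]
      refine integral_congr_ae (Eventually.of_forall fun x => ?_)
      have hx : 0 < ‖(x : E3)‖ := norm_pos_iff.2 x.2
      have h := hF (homeomorphUnitSphereProd E3 x).1 _ hx
      rw [homeomorphUnitSphereProd_apply_fst_coe, smul_inv_smul₀ hx.ne'] at h
      simp only [h, homeomorphUnitSphereProd_apply_snd_coe]
      ring
    _ = (∫ ω, g ω ∂sphMeasure) * ∫ r : Ioi (0 : ℝ), k r.1 ∂.volumeIoiPow (Module.finrank ℝ E3 - 1) :=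
      integral_prod_mul (fun ω => g ω) (fun r : Ioi (0:ℝ) => k r.1)
    _ = _ := by
      rw [hd]
      simp only [Measure.volumeIoiPow, ENNReal.ofReal]
      rw [integral_withDensity_eq_integral_smul,
        integral_subtype_comap measurableSet_Ioi fun a ↦ Real.toNNReal (a ^ 2) • k a,
        setIntegral_congr_fun measurableSet_Ioi fun x hx ↦ ?_]
      · rw [NNReal.smul_def, Real.coe_toNNReal _ (pow_nonneg hx.out.le _), smul_eq_mul]
      · exact (measurable_subtype_coe.pow_const _).real_toNNReal

lemma integrable_radial_cutoff (k : ℝ → ℝ) (hk : Continuous k)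
    (hk0 : ∀ r, r < 1 → k r = 0) (hk3 : ∀ r, 3 < r → k r = 0)
    (g : E3 → ℝ) (hg : ∀ x, x ≠ 0 → ContinuousAt g x) :
    Integrable (fun x : E3 => k ‖x‖ * g x) := by
  refine Continuous.integrable_of_hasCompactSupport ?_ ?_
  · rw [continuous_iff_continuousAt]
    intro x
    by_cases hx : x = 0
    · subst hx
      have : (fun x : E3 => k ‖x‖ * g x) =ᶠ[𝓝 0] fun _ => 0 := by
        filter_upwards [Metric.ball_mem_nhds (0 : E3) one_pos] with y hy
        rw [hk0 _ (by simpa using hy), zero_mul]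
      exact continuousAt_const.congr this.symm
    · exact (hk.continuousAt.comp continuous_norm.continuousAt).mul (hg x hx)
  · refine HasCompactSupport.intro (isCompact_closedBall (0 : E3) 3) fun x hx => ?_
    rw [hk3 _ (by simpa using hx), zero_mul]

lemma sphere_mean_fderiv_zero (G : E3 → ℝ) (hG : ∀ x, x ≠ 0 → ContDiffAt ℝ 1 G x)
    (hom : ∀ (r : ℝ) (x : E3), 0 < r → G (r • x) = (r ^ 2)⁻¹ * G x) (w : E3) :
    ∫ ω : Metric.sphere (0 : E3) 1, fderiv ℝ G (ω : E3) w ∂sphMeasure = 0 := by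
  let φ : ContDiffBump (2 : ℝ) := ⟨1 / 2, 1, by norm_num, by norm_num⟩
  have hφz : ∀ r, r ∉ Metric.closedBall (2 : ℝ) 1 → φ r = 0 := fun r hr => by
    apply image_eq_zero_of_notMem_tsupport
    rw [φ.tsupport_eq]; exact hr
  have hφi : 0 < ∫ r, φ r := φ.integral_pos
  have hφ2 : ContDiff ℝ 2 φ := φ.contDiff
  obtain ⟨χ, hχdef⟩ : ∃ χ : ℝ → ℝ, χ = fun r => r * φ r := ⟨_, rfl⟩
  have hχ : ContDiff ℝ 2 χ := by rw [hχdef]; exact contDiff_id.mul hφ2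
  have hχcont : Continuous χ := hχ.continuous
  have hχd : ∀ r, HasDerivAt χ (deriv χ r) r := fun r =>
    (hχ.differentiable (by norm_num) r).hasDerivAt
  have hχ'c : Continuous (deriv χ) := hχ.continuous_deriv (by norm_num)
  have hχz : ∀ r, r ∉ Metric.closedBall (2 : ℝ) 1 → χ r = 0 := fun r hr => by
    rw [hχdef]; simp [hφz r hr]
  have hχcs : HasCompactSupport χ := HasCompactSupport.intro (isCompact_closedBall (2 : ℝ) 1) hχz
  have hχ'z : ∀ r, r ∉ Metric.closedBall (2 : ℝ) 1 → deriv χ r = 0 := fun r hr => by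
    have : χ =ᶠ[𝓝 r] fun _ => 0 := by
      filter_upwards [Metric.isClosed_closedBall.isOpen_compl.mem_nhds hr] with y hy
      exact hχz y hy
    rw [this.deriv_eq]; simp
  have hb0 : ∀ r : ℝ, r < 1 → r ∉ Metric.closedBall (2 : ℝ) 1 := fun r hr h => by
    rw [Metric.mem_closedBall, Real.dist_eq, abs_le] at h; linarith
  have hb3 : ∀ r : ℝ, 3 < r → r ∉ Metric.closedBall (2 : ℝ) 1 := fun r hr h => by
    rw [Metric.mem_closedBall, Real.dist_eq, abs_le] at h; linarith
  have hGc : ∀ x, x ≠ 0 → ContinuousAt G x := fun x hx => (hG x hx).continuousAt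
  have hG'c : ∀ x, x ≠ 0 → ContinuousAt (fun x => fderiv ℝ G x w) x := fun x hx =>
    ((hG x hx).continuousAt_fderiv (by norm_num)).clm_apply continuousAt_const
  have i1 := integrable_radial_cutoff χ hχcont (fun r h => hχz r (hb0 r h))
    (fun r h => hχz r (hb3 r h)) _ hG'c
  have i2 := integrable_radial_cutoff (deriv χ) hχ'c (fun r h => hχ'z r (hb0 r h))
    (fun r h => hχ'z r (hb3 r h)) (fun x => ‖x‖⁻¹ * ⟪x, w⟫ * G x) (fun x hx => by
      have : ‖x‖ ≠ 0 := norm_ne_zero_iff.2 hx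
      exact ((continuous_norm.continuousAt.inv₀ this).mul (by fun_prop)).mul (hGc x hx))
  have i0 := integrable_radial_cutoff χ hχcont (fun r h => hχz r (hb0 r h))
    (fun r h => hχz r (hb3 r h)) _ hGc
  have hd : ∀ x : E3, HasLineDerivAt ℝ (fun x : E3 => χ ‖x‖ * G x)
      (χ ‖x‖ * fderiv ℝ G x w + deriv χ ‖x‖ * (‖x‖⁻¹ * ⟪x, w⟫ * G x)) x w := by
    intro x
    by_cases hx : x = 0
    · subst hx
      have : (fun x : E3 => χ ‖x‖ * G x) =ᶠ[𝓝 0] fun _ => 0 := by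
        filter_upwards [Metric.ball_mem_nhds (0 : E3) one_pos] with y hy
        rw [hχz _ (hb0 _ (by simpa using hy)), zero_mul]
      have h := ((hasFDerivAt_const (𝕜 := ℝ) (0:ℝ) (0:E3)).congr_of_eventuallyEq this).hasLineDerivAt w
      rw [hχz _ (hb0 _ (by simp)), hχ'z _ (hb0 _ (by simp)), zero_mul, zero_mul, add_zero]
      exact h
    · have hn : HasFDerivAt (fun x : E3 => ‖x‖) (‖x‖⁻¹ • innerSL ℝ x) x := hasFDerivAt_norm_E3 x hx
      have h := ((hχd ‖x‖).comp_hasFDerivAt x hn).mul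
        ((hG x hx).differentiableAt (by norm_num)).hasFDerivAt
      have h' := h.hasLineDerivAt w
      simp only [add_apply, smul_apply, innerSL_apply_apply, smul_eq_mul, Function.comp_apply] at h'
      have e : χ ‖x‖ * fderiv ℝ G x w + deriv χ ‖x‖ * (‖x‖⁻¹ * ⟪x, w⟫ * G x)
        = χ ‖x‖ * fderiv ℝ G x w + G x * (deriv χ ‖x‖ * (‖x‖⁻¹ * ⟪x, w⟫)) := by ring
      rw [e]
      exact h'
  have key := integral_bilinear_hasLineDerivAt_right_eq_neg_left_of_integrable
    (μ := (volume : Measure E3)) (f := fun _ => (1:ℝ)) (f' := fun _ => 0) (v := w)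
    (B := ContinuousLinearMap.mul ℝ ℝ) (g := fun x : E3 => χ ‖x‖ * G x)
    (g' := fun x => χ ‖x‖ * fderiv ℝ G x w + deriv χ ‖x‖ * (‖x‖⁻¹ * ⟪x, w⟫ * G x))
    (by simp) (by simpa using! i1.add i2) (by simpa using i0)
    (fun x _ => by simpa using (hasFDerivAt_const (1:ℝ) x).hasLineDerivAt w) (fun x _ => hd x)
  simp only [ContinuousLinearMap.mul_apply', one_mul, zero_mul, integral_zero, neg_zero] at key
  rw [integral_add i1 i2] at key
  rw [integral_polar_sep _ (fun r => χ r * (r ^ 3)⁻¹) (fun ω => fderiv ℝ G (ω : E3) w) ?_,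
    integral_polar_sep _ (fun r => deriv χ r * (r ^ 2)⁻¹) (fun ω => ⟪(ω : E3), w⟫ * G ω) ?_] at key
  · have z : ∫ r in Ioi (0 : ℝ), r ^ 2 * (deriv χ r * (r ^ 2)⁻¹) = 0 := by
      rw [setIntegral_congr_fun (g := deriv χ) measurableSet_Ioi fun r hr => ?_]
      · rw [setIntegral_eq_integral_of_forall_compl_eq_zero]
        · refine integral_eq_zero_of_hasDerivAt_of_integrable hχd ?_ ?_
          · exact hχ'c.integrable_of_hasCompactSupport hχcs.deriv
          · exact hχcont.integrable_of_hasCompactSupport hχcs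
        · intro r hr
          exact hχ'z r (hb0 r (by simp at hr; linarith))
      · have : r ≠ 0 := ne_of_gt hr
        field_simp
    have p : 0 < ∫ r in Ioi (0 : ℝ), r ^ 2 * (χ r * (r ^ 3)⁻¹) := by
      rw [setIntegral_congr_fun (g := φ) measurableSet_Ioi fun r hr => ?_]
      · rw [setIntegral_eq_integral_of_forall_compl_eq_zero]
        · exact hφi
        · intro r hr
          exact hφz r (hb0 r (by simp at hr; linarith))
      · have : r ≠ 0 := ne_of_gt hr
        simp only [hχdef]
        field_simp
    rw [z, mul_zero, add_zero] at key
    exact (mul_eq_zero.1 key).resolve_right p.ne'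
  · intro ω r hr
    have hω : ‖(ω : E3)‖ = 1 := by simp
    simp only [norm_smul, hω, mul_one, Real.norm_of_nonneg hr.le, hom r _ hr, real_inner_smul_left]
    field_simp
  · intro ω r hr
    have hω : ‖(ω : E3)‖ = 1 := by simp
    have e : (fun x => G (r • x)) = (fun x => ((r ^ 2)⁻¹ : ℝ) • G x) := by
      ext x; exact hom r x hr
    have E' : fderiv ℝ (fun x => ((r ^ 2)⁻¹ : ℝ) • G x) (ω : E3) = ((r ^ 2)⁻¹ : ℝ) • fderiv ℝ G ω :=
      congrFun (fderiv_const_smul_field (𝕜 := ℝ) (f := G) ((r ^ 2)⁻¹ : ℝ)) (ω : E3)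
    have h2 := congrArg (fun f => fderiv ℝ f (ω : E3)) e
    simp only [fderiv_comp_smul, E'] at h2
    have h3 := congrArg (fun f => f w) h2
    simp only [smul_apply, smul_eq_mul] at h3
    simp only [norm_smul, hω, mul_one, Real.norm_of_nonneg hr.le]
    have : fderiv ℝ G (r • (ω : E3)) w = (r^3)⁻¹ * fderiv ℝ G (ω : E3) w := by
      field_simp at h3 ⊢
      linarith
    rw [this]; ring

/-- The linear form `(t,x) ↦ τ t - x·e`. -/
def Lf (τ : ℝ) (e : E3) : ℝ × E3 →L[ℝ] ℝ :=
  τ • ContinuousLinearMap.fst ℝ ℝ E3 - (innerSL ℝ e).comp (ContinuousLinearMap.snd ℝ ℝ E3)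

lemma Lf_apply (τ : ℝ) (e : E3) (p : ℝ × E3) : Lf τ e p = τ * p.1 - ⟪p.2, e⟫ := by
  simp [Lf, real_inner_comm]

lemma alpha_form (v : E3) (i : Fin 4) : ∃ (τ : ℝ) (e : E3), dir4 i = (τ, e) ∧
    alphaF v i = fun p => Lf τ e p / Lf 1 v p := by
  refine Fin.cases ?_ (fun k => ?_) i
  · refine ⟨1, 0, rfl, ?_⟩
    funext p
    simp [alphaF, Lf_apply]
  · refine ⟨0, e3 k, rfl, ?_⟩
    funext p
    simp only [alphaF, Fin.cons_succ, Lf_apply, e3, EuclideanSpace.inner_single_right]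
    rw [← neg_sub p.1, div_neg]
    simp [neg_div]

/-- Explicit form of `T(L/u)`. -/
def hF (v : E3) (τ : ℝ) (e : E3) (p : ℝ × E3) : ℝ :=
  (Lf τ e (1, v) * Lf 1 v p - Lf τ e p * Lf 1 v (1, v)) / (Lf 1 v p) ^ 2

lemma hasFDerivAt_quot (v : E3) (τ : ℝ) (e : E3) (p : ℝ × E3) (hp : Lf 1 v p ≠ 0) :
    HasFDerivAt (fun p => Lf τ e p / Lf 1 v p)
      (((Lf 1 v p) ^ 2)⁻¹ • (Lf 1 v p • Lf τ e - Lf τ e p • Lf 1 v)) p := by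
  have h1 : HasFDerivAt (fun p => Lf τ e p) (Lf τ e) p := (Lf τ e).hasFDerivAt
  have h2 : HasFDerivAt (fun p => Lf 1 v p) (Lf 1 v) p := (Lf 1 v).hasFDerivAt
  have h3 := h1.mul ((hasDerivAt_inv hp).comp_hasFDerivAt p h2)
  have e : ((Lf 1 v p) ^ 2)⁻¹ • (Lf 1 v p • Lf τ e - Lf τ e p • Lf 1 v) =
      Lf τ e p • (-((Lf 1 v p) ^ 2)⁻¹ • Lf 1 v) + (Lf 1 v p)⁻¹ • Lf τ e := by
    refine ContinuousLinearMap.ext fun w => ?_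
    simp only [smul_apply, sub_apply, add_apply, smul_eq_mul]
    field_simp
    ring
  rw [e]
  exact h3

lemma Talpha_eq_s11 (v : E3) (j : Fin 4) (τ : ℝ) (e : E3)
    (h : alphaF v j = fun p => Lf τ e p / Lf 1 v p) (p : ℝ × E3) (hp : Lf 1 v p ≠ 0) :
    TalphaF v j p = hF v τ e p := by
  rw [TalphaF, h, (hasFDerivAt_quot v τ e p hp).fderiv, hF]
  simp only [smul_apply, sub_apply, smul_eq_mul]
  field_simp

lemma hF_smooth (v : E3) (τ : ℝ) (e : E3) (p : ℝ × E3) (hp : Lf 1 v p ≠ 0) :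
    ContDiffAt ℝ 1 (hF v τ e) p := by
  unfold hF
  have : (Lf 1 v p) ^ 2 ≠ 0 := pow_ne_zero 2 hp
  fun_prop (disch := assumption)

lemma Lf_cone_pos (v : E3) (hv : ‖v‖ < 1) (x : E3) (hx : x ≠ 0) : 0 < Lf 1 v (‖x‖, x) := by
  rw [Lf_apply]
  have h1 := real_inner_le_norm x v
  have h2 : 0 < ‖x‖ := norm_pos_iff.2 hx
  nlinarith

lemma Lf_smul_cone (τ : ℝ) (e : E3) (r : ℝ) (hr : 0 < r) (x : E3) :
    Lf τ e (‖r • x‖, r • x) = r * Lf τ e (‖x‖, x) := by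
  simp only [Lf_apply, norm_smul, Real.norm_of_nonneg hr.le, real_inner_smul_left]
  ring

lemma hF_smul_cone (v : E3) (τ : ℝ) (e : E3) (r : ℝ) (hr : 0 < r) (x : E3) :
    hF v τ e (‖r • x‖, r • x) = r⁻¹ * hF v τ e (‖x‖, x) := by
  simp only [hF, Lf_smul_cone _ _ _ hr]
  by_cases h : Lf 1 v (‖x‖, x) = 0
  · simp [h]
  · field_simp

/-- The two degree `-2` homogeneous functions on `ℝ³`. -/
def G1 (v : E3) (τ : ℝ) (e : E3) (τ' : ℝ) (e' : E3) (x : E3) : ℝ :=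
  Lf τ e (‖x‖, x) / Lf 1 v (‖x‖, x) * hF v τ' e' (‖x‖, x) * ‖x‖⁻¹

def G2 (v : E3) (τ' : ℝ) (e' : E3) (x : E3) : ℝ := hF v τ' e' (‖x‖, x) * ‖x‖⁻¹

lemma cone_smooth (x : E3) (hx : x ≠ 0) : ContDiffAt ℝ 1 (fun x : E3 => (‖x‖, x)) x :=
  (contDiffAt_norm ℝ hx).prodMk contDiffAt_id

lemma G2_smooth (v : E3) (hv : ‖v‖ < 1) (τ' : ℝ) (e' : E3) (x : E3) (hx : x ≠ 0) :
    ContDiffAt ℝ 1 (G2 v τ' e') x := by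
  have h1 := ContDiffAt.comp (f := fun x : E3 => (‖x‖, x)) x
    (hF_smooth v τ' e' (‖x‖, x) (Lf_cone_pos v hv x hx).ne') (cone_smooth x hx)
  exact h1.mul ((contDiffAt_norm ℝ hx).inv (norm_ne_zero_iff.2 hx))

lemma G1_smooth (v : E3) (hv : ‖v‖ < 1) (τ : ℝ) (e : E3) (τ' : ℝ) (e' : E3) (x : E3)
    (hx : x ≠ 0) : ContDiffAt ℝ 1 (G1 v τ e τ' e') x := by
  have h1 := ContDiffAt.comp (f := fun x : E3 => (‖x‖, x)) x
    (hF_smooth v τ' e' (‖x‖, x) (Lf_cone_pos v hv x hx).ne') (cone_smooth x hx)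
  have h2 := (Lf τ e).contDiff.contDiffAt.comp x (cone_smooth x hx)
  have h3 := (Lf 1 v).contDiff.contDiffAt.comp x (cone_smooth x hx)
  exact ((h2.div h3 (Lf_cone_pos v hv x hx).ne').mul h1).mul
    ((contDiffAt_norm ℝ hx).inv (norm_ne_zero_iff.2 hx))

lemma G2_hom (v : E3) (τ' : ℝ) (e' : E3) (r : ℝ) (x : E3) (hr : 0 < r) :
    G2 v τ' e' (r • x) = (r ^ 2)⁻¹ * G2 v τ' e' x := by
  simp only [G2, hF_smul_cone v τ' e' r hr x]
  rw [norm_smul, Real.norm_of_nonneg hr.le, mul_inv]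
  field_simp

lemma G1_hom (v : E3) (τ : ℝ) (e : E3) (τ' : ℝ) (e' : E3) (r : ℝ) (x : E3) (hr : 0 < r) :
    G1 v τ e τ' e' (r • x) = (r ^ 2)⁻¹ * G1 v τ e τ' e' x := by
  simp only [G1, hF_smul_cone v τ' e' r hr x, Lf_smul_cone _ _ r hr]
  rw [norm_smul, Real.norm_of_nonneg hr.le, mul_inv, mul_div_mul_left _ _ hr.ne']
  field_simp

lemma b2_eq (v : E3) (hv : ‖v‖ < 1) (i j : Fin 4) (τ : ℝ) (e : E3) (τ' : ℝ) (e' : E3)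
    (hd : dir4 i = (τ, e)) (hi : alphaF v i = fun p => Lf τ e p / Lf 1 v p)
    (hj : alphaF v j = fun p => Lf τ' e' p / Lf 1 v p) (x : E3) (hx : ‖x‖ = 1) :
    b2F v i j (1, x) = fderiv ℝ (G1 v τ e τ' e') x v - fderiv ℝ (G2 v τ' e') x e := by
  have hx0 : x ≠ 0 := by rintro rfl; simp at hx
  have hu := Lf_cone_pos v hv x hx0
  rw [hx] at hu
  have hu0 := hu.ne'
  have hcont : ∀ᶠ p in 𝓝 ((1 : ℝ), x), Lf 1 v p ≠ 0 :=
    (Lf 1 v).continuous.continuousAt.eventually_ne hu0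
  have hev : TalphaF v j =ᶠ[𝓝 ((1 : ℝ), x)] hF v τ' e' := by
    filter_upwards [hcont] with p hp using Talpha_eq_s11 v j τ' e' hj p hp
  have hh := ((hF_smooth v τ' e' (1, x) hu0).differentiableAt (by norm_num)).hasFDerivAt
  have hq := hasFDerivAt_quot v τ e (1, x) hu0
  set h' := fderiv ℝ (hF v τ' e') (1, x) with hh'
  set h0 := hF v τ' e' (1, x) with hh0
  have e1 : fderiv ℝ (TalphaF v j) (1, x) = h' := hev.fderiv_eq
  have e2 : (fun q => alphaF v i q * TalphaF v j q) =ᶠ[𝓝 ((1 : ℝ), x)]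
      fun q => Lf τ e q / Lf 1 v q * hF v τ' e' q := by
    filter_upwards [hev] with p hp
    rw [hp, hi]
  rw [b2F, e1, e2.fderiv_eq, (hq.fun_mul hh).fderiv, hd]
  have hn := hasFDerivAt_norm_E3 x hx0
  have hc : HasFDerivAt (fun x : E3 => (‖x‖, x))
    ((‖x‖⁻¹ • innerSL ℝ x).prod (ContinuousLinearMap.id ℝ E3)) x := hn.prodMk (hasFDerivAt_id x)
  have hinv := (hasDerivAt_inv (by rw [hx]; norm_num : ‖x‖ ≠ 0)).comp_hasFDerivAt x hn
  have hhc : HasFDerivAt (fun x : E3 => hF v τ' e' (‖x‖, x)) _ x :=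
    HasFDerivAt.comp (g := hF v τ' e') x (by rw [hx]; exact hh) hc
  have hqc : HasFDerivAt (fun x : E3 => Lf τ e (‖x‖, x) / Lf 1 v (‖x‖, x)) _ x :=
    HasFDerivAt.comp (g := fun p => Lf τ e p / Lf 1 v p) x (by rw [hx]; exact hq) hc
  have g2 : HasFDerivAt (G2 v τ' e') _ x := hhc.mul hinv
  have g1 : HasFDerivAt (G1 v τ e τ' e') _ x := (hqc.mul hhc).mul hinv
  rw [g1.fderiv, g2.fderiv]
  have l1 : ∀ (s : ℝ) (y : E3), h' (s, y) = s * h' (1, 0) + h' (0, y) := fun s y => by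
    rw [← smul_eq_mul, ← map_smul, ← map_add]; simp
  simp [hx, ← hh0, Function.comp_apply]
  rw [l1 1 v, l1 ⟪x, v⟫ v, l1 ⟪x, e⟫ e, l1 τ e]
  simp only [Lf_apply] at hu0 ⊢
  simp only [mul_one, one_mul] at hu0 ⊢
  field_simp
  ring

lemma integrable_sphere_fderiv (G : E3 → ℝ) (hG : ∀ x, x ≠ 0 → ContDiffAt ℝ 1 G x) (w : E3) :
    Integrable (fun ω : Metric.sphere (0 : E3) 1 => fderiv ℝ G (ω : E3) w) sphMeasure := by
  have : IsFiniteMeasure sphMeasure := by unfold sphMeasure; infer_instance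
  refine Continuous.integrable_of_hasCompactSupport ?_ (HasCompactSupport.of_compactSpace _)
  rw [continuous_iff_continuousAt]
  intro ω
  have h0 : (ω : E3) ≠ 0 := by
    intro h
    have h1 : ‖(ω : E3)‖ = 1 := by simp
    rw [h] at h1; simp at h1
  exact ContinuousAt.comp (f := fun ω : Metric.sphere (0 : E3) 1 => (ω : E3))
    (g := fun x => fderiv ℝ G x w)
    (((hG _ h0).continuousAt_fderiv (by norm_num)).clm_apply continuousAt_const)
    continuous_subtype_val.continuousAt

/-- **Vanishing spherical mean of the degree `-2` coefficients in the division lemma**: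
for `|v| < 1` and `i,j ∈ {0,1,2,3}`, `∫_{S²} b²_{ij}(1,ω) dσ(ω) = 0`. -/
theorem b2_spherical_mean_zero (v : E3) (hv : ‖v‖ < 1) (i j : Fin 4) :
    ∫ ω : Metric.sphere (0 : E3) 1, b2F v i j ((1 : ℝ), (ω : E3)) ∂sphMeasure = 0 := by
  obtain ⟨τ, e, hd, hi⟩ := alpha_form v i
  obtain ⟨τ', e', -, hj⟩ := alpha_form v j
  have hE : ∀ ω : Metric.sphere (0 : E3) 1, b2F v i j ((1 : ℝ), (ω : E3)) =
      fderiv ℝ (G1 v τ e τ' e') (ω : E3) v - fderiv ℝ (G2 v τ' e') (ω : E3) e := fun ω =>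
    b2_eq v hv i j τ e τ' e' hd hi hj ω (by simp)
  simp only [hE]
  rw [integral_sub (integrable_sphere_fderiv _ (G1_smooth v hv τ e τ' e') v)
    (integrable_sphere_fderiv _ (G2_smooth v hv τ' e') e),
    sphere_mean_fderiv_zero _ (G1_smooth v hv τ e τ' e') (G1_hom v τ e τ' e') v,
    sphere_mean_fderiv_zero _ (G2_smooth v hv τ' e') (G2_hom v τ' e') e, sub_zero]
end
end

section
/- Logarithmic estimate for mean-zero spherical kernels: let b : S² → ℝ be continuous with ∫_{S²} b(ω) dσ(ω) = 0, let t > 0, M ≥ 0, L > 0, and let f : [0,t] × ℝ³ → ℝ be measurable with |f(s,y)| ≤ M for all (s,y) and |f(s,y) − f(s,y′)| ≤ L|y − y′| for all s ∈ [0,t] and y, y′ ∈ ℝ³. Then for every x ∈ ℝ³, | ∫_0^t (1/(4πs)) ∫_{S²} b(ω) f(t−s, x−sω) dσ(ω) ds | ≤ ‖b‖_{L^∞(S²)} ( M ln₊(tL) + 1 ), where ln₊ z = max(ln z, 0). -/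
open MeasureTheory Real Set Filter Metric RealInnerProductSpace
open scoped ENNReal NNReal Topology

noncomputable section

/-- `ln₊ z = max (ln z) 0`. -/
def lnpos (z : ℝ) : ℝ := max (Real.log z) 0

lemma sphMeasure_univ_aux : sphMeasure Set.univ = ENNReal.ofReal (4 * π) := by
  unfold sphMeasure
  rw [Measure.toSphere_apply_univ, EuclideanSpace.volume_ball_fin_three]
  simp only [finrank_euclideanSpace, Fintype.card_fin]
  rw [ENNReal.ofReal_one, one_pow, one_mul,
    show ((3 : ℕ) : ℝ≥0∞) = ENNReal.ofReal 3 by simp,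
    ← ENNReal.ofReal_mul (by norm_num)]
  congr 1
  ring

lemma sphMeasure_real_aux : sphMeasure.real Set.univ = 4 * π := by
  rw [Measure.real, sphMeasure_univ_aux, ENNReal.toReal_ofReal (by positivity)]

instance sphMeasure_finite_aux : IsFiniteMeasure sphMeasure :=
  ⟨by rw [sphMeasure_univ_aux]; exact ENNReal.ofReal_lt_top⟩

lemma dom_integral_aux (t θ A C : ℝ) (h0 : 0 < θ) (h1 : θ ≤ t) :
    IntegrableOn (fun s => if s ≤ θ then A else C * s⁻¹) (Set.Ioc 0 t) ∧
    ∫ s in Set.Ioc 0 t, (if s ≤ θ then A else C * s⁻¹) = A * θ + C * Real.log (t / θ) := by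
  have hu : Set.Ioc 0 t = Set.Ioc 0 θ ∪ Set.Ioc θ t := (Set.Ioc_union_Ioc_eq_Ioc h0.le h1).symm
  have e1 : EqOn (fun s => if s ≤ θ then A else C * s⁻¹) (fun _ => A) (Set.Ioc 0 θ) := by
    intro s hs
    simp [hs.2]
  have e2 : EqOn (fun s => if s ≤ θ then A else C * s⁻¹) (fun s => C * s⁻¹) (Set.Ioc θ t) := by
    intro s hs
    simp [not_le.mpr hs.1]
  have i1 : IntegrableOn (fun s => if s ≤ θ then A else C * s⁻¹) (Set.Ioc 0 θ) := by
    rw [integrableOn_congr_fun e1 measurableSet_Ioc]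
    exact integrableOn_const (by simp)
  have i2 : IntegrableOn (fun s => if s ≤ θ then A else C * s⁻¹) (Set.Ioc θ t) := by
    rw [integrableOn_congr_fun e2 measurableSet_Ioc]
    have : ContinuousOn (fun s : ℝ => C * s⁻¹) (Set.Icc θ t) := by
      apply ContinuousOn.mul continuousOn_const
      exact continuousOn_inv₀.mono (fun s hs => (lt_of_lt_of_le h0 hs.1).ne')
    exact (this.integrableOn_Icc).mono_set Ioc_subset_Icc_self
  refine ⟨by rw [hu]; exact i1.union i2, ?_⟩
  rw [hu, setIntegral_union (Set.Ioc_disjoint_Ioc_of_le le_rfl) measurableSet_Ioc i1 i2,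
    setIntegral_congr_fun measurableSet_Ioc e1, setIntegral_congr_fun measurableSet_Ioc e2,
    ← intervalIntegral.integral_of_le h0.le, ← intervalIntegral.integral_of_le h1,
    intervalIntegral.integral_const, intervalIntegral.integral_const_mul,
    integral_inv_of_pos h0 (h0.trans_le h1)]
  simp [mul_comm]

/-- **Logarithmic estimate for mean-zero spherical kernels**: if `b` is continuous on
`S²` with zero mean, `|f| ≤ M` and `f(s,·)` is `L`-Lipschitz, then for every `x`,
`|∫_0^t (1/(4πs)) ∫_{S²} b(ω) f(t-s, x-sω) dσ(ω) ds| ≤ ‖b‖_{L^∞(S²)} (M ln₊(tL) + 1)`. -/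
theorem log_estimate_mean_zero_kernel
    (b : Metric.sphere (0 : E3) 1 → ℝ) (hb : Continuous b)
    (hbmean : ∫ ω, b ω ∂sphMeasure = 0)
    (t M L : ℝ) (ht : 0 < t) (hM : 0 ≤ M) (hL : 0 < L)
    (f : ℝ → E3 → ℝ) (hmeas : Measurable fun q : ℝ × E3 => f q.1 q.2)
    (hbd : ∀ s ∈ Set.Icc 0 t, ∀ y : E3, |f s y| ≤ M)
    (hlip : ∀ s ∈ Set.Icc 0 t, ∀ y y' : E3, |f s y - f s y'| ≤ L * ‖y - y'‖) :
    ∀ x : E3,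
      |∫ s in Set.Ioc 0 t,
          (4 * π * s)⁻¹ * ∫ ω, b ω * f (t - s) (x - s • (ω : E3)) ∂sphMeasure|
        ≤ (⨆ ω : Metric.sphere (0 : E3) 1, |b ω|) * (M * lnpos (t * L) + 1) := by
  intro x
  set B := ⨆ ω : Metric.sphere (0 : E3) 1, |b ω| with hB
  have hBle : ∀ ω, |b ω| ≤ B := fun ω =>
    le_ciSup (isCompact_range hb.abs).bddAbove ω
  have hB0 : 0 ≤ B := Real.iSup_nonneg fun ω => abs_nonneg _
  have hpi := Real.pi_pos
  obtain ⟨θ, h0, h1, h2, h3⟩ : ∃ θ : ℝ, 0 < θ ∧ θ ≤ t ∧ L * θ ≤ 1 ∧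
      Real.log (t / θ) = lnpos (t * L) := by
    rcases le_total (t * L) 1 with h | h
    · refine ⟨t, ht, le_rfl, by linarith, ?_⟩
      rw [div_self ht.ne', Real.log_one, lnpos, max_eq_right]
      exact Real.log_nonpos (by positivity) h
    · refine ⟨1 / L, by positivity, by rw [div_le_iff₀ hL]; exact h,
        by rw [mul_one_div_cancel hL.ne'], ?_⟩
      rw [div_div_eq_mul_div, div_one, lnpos, max_eq_left]
      exact Real.log_nonneg h
  obtain ⟨hi, he⟩ := dom_integral_aux t θ (B * L) (B * M) h0 h1
  have key : ∀ s ∈ Set.Ioc 0 t,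
      ‖(4 * π * s)⁻¹ * ∫ ω, b ω * f (t - s) (x - s • (ω : E3)) ∂sphMeasure‖
        ≤ if s ≤ θ then B * L else B * M * s⁻¹ := by
    intro s hs
    have hs0 : 0 < s := hs.1
    have hts : t - s ∈ Set.Icc 0 t := ⟨by linarith [hs.2], by linarith⟩
    have hfin : ∀ D : ℝ, ‖∫ ω, b ω * f (t - s) (x - s • (ω : E3)) ∂sphMeasure‖
        ≤ B * D * (4 * π) →
        ‖(4 * π * s)⁻¹ * ∫ ω, b ω * f (t - s) (x - s • (ω : E3)) ∂sphMeasure‖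
        ≤ B * D * s⁻¹ := by
      intro D hD
      rw [norm_mul, Real.norm_of_nonneg (by positivity : (0:ℝ) ≤ (4 * π * s)⁻¹)]
      calc _ ≤ (4 * π * s)⁻¹ * (B * D * (4 * π)) := by gcongr
        _ = _ := by field_simp
    have hbM : ∀ ω : Metric.sphere (0 : E3) 1, ‖b ω * f (t - s) (x - s • (ω : E3))‖ ≤ B * M := by
      intro ω
      rw [norm_mul]
      exact mul_le_mul (hBle ω) (hbd _ hts _) (abs_nonneg _) hB0
    split_ifs with hsθ
    · have hmf : Measurable fun ω : Metric.sphere (0 : E3) 1 =>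
          f (t - s) (x - s • (ω : E3)) := by
        have : Measurable fun ω : Metric.sphere (0 : E3) 1 =>
          ((t - s, x - s • (ω : E3)) : ℝ × E3) := by fun_prop
        exact hmeas.comp this
      have int1 : Integrable (fun ω : Metric.sphere (0 : E3) 1 =>
          b ω * f (t - s) (x - s • (ω : E3))) sphMeasure :=
        Integrable.of_bound (hb.measurable.mul hmf).aestronglyMeasurable (B * M)
          (Eventually.of_forall hbM)
      have intb : Integrable b sphMeasure :=
        Integrable.of_bound hb.measurable.aestronglyMeasurable B
          (Eventually.of_forall hBle)
      have heq : ∫ ω, b ω * f (t - s) (x - s • (ω : E3)) ∂sphMeasure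
          = ∫ ω, b ω * (f (t - s) (x - s • (ω : E3)) - f (t - s) x) ∂sphMeasure := by
        simp_rw [mul_sub]
        rw [integral_sub int1 (intb.mul_const _), integral_mul_const, hbmean]
        simp
      have := hfin (L * s) (by
        rw [heq, ← sphMeasure_real_aux]
        apply norm_integral_le_of_norm_le_const
        refine Eventually.of_forall fun ω => ?_
        rw [norm_mul]
        refine mul_le_mul (hBle ω) ?_ (norm_nonneg _) hB0
        refine (hlip _ hts _ _).trans (le_of_eq ?_)
        have hω : ‖(ω : E3)‖ = 1 := norm_eq_of_mem_sphere ω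
        rw [sub_sub_cancel_left, norm_neg, norm_smul, hω, Real.norm_of_nonneg hs0.le, mul_one])
      refine this.trans (le_of_eq ?_)
      field_simp
    · apply hfin
      rw [← sphMeasure_real_aux]
      exact norm_integral_le_of_norm_le_const (Eventually.of_forall hbM)
  have := norm_integral_le_of_norm_le hi
    ((ae_restrict_iff' measurableSet_Ioc).2 (Eventually.of_forall key))
  rw [he, h3] at this
  refine this.trans ?_
  nlinarith [mul_le_mul_of_nonneg_left h2 hB0]
end
end

section
/- Logarithmic Gronwall lemma: let τ > 0, A ≥ 0, C ≥ 0 and let N : [0,τ) → [0,∞) be continuous and satisfy N(t) ≤ A + C∫_0^t (1 + ln₊ N(s)) N(s) ds for every t ∈ [0,τ) (the integral being finite). Then N(t) ≤ exp( (1 + ln(1+A)) e^{Ct} ) for every t ∈ [0,τ); in particular N is bounded on [0,τ). -/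
open MeasureTheory Real Set Filter
open scoped Topology

noncomputable section

/-- **Logarithmic Gronwall lemma**: if `N : [0,τ) → [0,∞)` is continuous and satisfies
`N(t) ≤ A + C ∫₀ᵗ (1 + ln₊ N(s)) N(s) ds` (the integral being finite), then
`N(t) ≤ exp((1 + ln(1+A)) e^{Ct})` for every `t ∈ [0,τ)`; in particular `N` is bounded
on `[0,τ)`. -/
theorem log_gronwall (τ A C : ℝ) (hτ : 0 < τ) (hA : 0 ≤ A) (hC : 0 ≤ C)
    (N : ℝ → ℝ) (hNcont : ContinuousOn N (Set.Ico 0 τ))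
    (hNpos : ∀ t ∈ Set.Ico 0 τ, 0 ≤ N t)
    (hNint : ∀ t ∈ Set.Ico 0 τ,
      IntervalIntegrable (fun s => (1 + lnpos (N s)) * N s) volume 0 t)
    (hNineq : ∀ t ∈ Set.Ico 0 τ,
      N t ≤ A + C * ∫ s in (0:ℝ)..t, (1 + lnpos (N s)) * N s) :
    ∀ t ∈ Set.Ico 0 τ, N t ≤ Real.exp ((1 + Real.log (1 + A)) * Real.exp (C * t)) := by
  intro t ht
  set g : ℝ → ℝ := fun s => (1 + lnpos (N s)) * N s with hg
  have hlp : Continuous lnpos := by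
    have : lnpos = Real.posLog := by
      funext z
      simp [lnpos, Real.posLog, max_comm]
    rw [this]
    exact Real.continuous_posLog
  have hgc : ContinuousOn g (Set.Ico 0 τ) :=
    (continuousOn_const.add (hlp.comp_continuousOn hNcont)).mul hNcont
  have hg0 : ∀ s ∈ Set.Ico 0 τ, 0 ≤ g s := by
    intro s hs
    have h1 : 0 ≤ lnpos (N s) := le_max_right _ _
    exact mul_nonneg (by linarith) (hNpos s hs)
  set F : ℝ → ℝ := fun x => 1 + A + C * ∫ s in (0:ℝ)..x, g s with hF
  have hF1 : ∀ x ∈ Set.Ico 0 τ, 1 ≤ F x := by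
    intro x hx
    have : 0 ≤ ∫ s in (0:ℝ)..x, g s :=
      intervalIntegral.integral_nonneg hx.1 (fun s hs => hg0 s ⟨hs.1, hs.2.trans_lt hx.2⟩)
    have := mul_nonneg hC this
    simp only [hF]
    linarith
  have hNF : ∀ x ∈ Set.Ico 0 τ, N x ≤ F x := by
    intro x hx
    have := hNineq x hx
    simp only [hF]
    linarith
  have hsub : ∀ x ∈ Set.Icc 0 t, x ∈ Set.Ico 0 τ := fun x hx => ⟨hx.1, hx.2.trans_lt ht.2⟩
  have hFc : ContinuousOn F (Set.Icc 0 t) := by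
    have h := intervalIntegral.continuousOn_primitive_interval' (hNint t ht) Set.left_mem_uIcc
    rw [Set.uIcc_of_le ht.1] at h
    exact continuousOn_const.add (continuousOn_const.mul h)
  have hFd : ∀ x ∈ Set.Ioo 0 t, HasDerivAt F (C * g x) x := by
    intro x hx
    have hxτ : x ∈ Set.Ioo 0 τ := ⟨hx.1, hx.2.trans ht.2⟩
    have hgo : ContinuousOn g (Set.Ioo 0 τ) := hgc.mono Set.Ioo_subset_Ico_self
    have h := intervalIntegral.integral_hasDerivAt_right (hNint x ⟨hx.1.le, hxτ.2⟩)
      (hgo.stronglyMeasurableAtFilter isOpen_Ioo x hxτ)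
      (hgo.continuousAt (isOpen_Ioo.mem_nhds hxτ))
    exact (h.const_mul C).const_add _
  set G : ℝ → ℝ := fun x => (1 + Real.log (F x)) * Real.exp (-(C * x)) with hG
  have hGd : ∀ x ∈ Set.Ioo 0 t, HasDerivAt G
      ((C * g x / F x) * Real.exp (-(C * x))
        + (1 + Real.log (F x)) * (Real.exp (-(C * x)) * (-(C * 1)))) x := by
    intro x hx
    have hp : F x ≠ 0 := by
      have := hF1 x (hsub x ⟨hx.1.le, hx.2.le⟩)
      linarith
    exact (((hFd x hx).log hp).const_add 1).mul (((hasDerivAt_id x).const_mul C).neg.exp)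
  have hanti : AntitoneOn G (Set.Icc 0 t) := by
    apply antitoneOn_of_deriv_nonpos (convex_Icc 0 t)
    · refine (continuousOn_const.add (hFc.log ?_)).mul (by fun_prop)
      intro x hx
      have := hF1 x (hsub x hx)
      linarith
    · intro x hx
      rw [interior_Icc] at hx
      exact (hGd x hx).differentiableAt.differentiableWithinAt
    · intro x hx
      rw [interior_Icc] at hx
      rw [(hGd x hx).deriv]
      have hx' := hsub x ⟨hx.1.le, hx.2.le⟩
      have h1 := hF1 x hx'
      have hl0 : 0 ≤ Real.log (F x) := Real.log_nonneg h1
      have hl : lnpos (N x) ≤ Real.log (F x) := by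
        refine max_le ?_ hl0
        rcases (hNpos x hx').eq_or_lt with h | h
        · rw [← h, Real.log_zero]; exact hl0
        · exact Real.log_le_log h (hNF x hx')
      have hgl : g x ≤ (1 + Real.log (F x)) * F x :=
        mul_le_mul (by linarith) (hNF x hx') (hNpos x hx') (by linarith)
      have h2 : C * g x / F x ≤ C * (1 + Real.log (F x)) := by
        rw [div_le_iff₀ (by linarith), mul_assoc]
        exact mul_le_mul_of_nonneg_left hgl hC
      have h3 := mul_le_mul_of_nonneg_right h2 (Real.exp_pos (-(C * x))).le
      linarith
  have h := hanti (Set.left_mem_Icc.2 ht.1) (Set.right_mem_Icc.2 ht.1) ht.1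
  have hG0 : G 0 = 1 + Real.log (1 + A) := by simp [hG, hF]
  rw [hG0] at h
  have h4 : 1 + Real.log (F t) ≤ (1 + Real.log (1 + A)) * Real.exp (C * t) := by
    have h5 := mul_le_mul_of_nonneg_right h (Real.exp_pos (C * t)).le
    simp only [hG] at h5
    rwa [mul_assoc, ← Real.exp_add, neg_add_cancel, Real.exp_zero, mul_one] at h5
  have hFt := hF1 t ht
  calc N t ≤ F t := hNF t ht
    _ = Real.exp (Real.log (F t)) := (Real.exp_log (by linarith)).symm
    _ ≤ _ := Real.exp_le_exp.2 (by linarith)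
end
end
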